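/- arXiv:1110.5682 — 3 statements merged into one kernel-verified Lean document; each statement's English description precedes it below -/
import Mathlib

section
/- Let k ∈ {1,…,d−1} and let μ be a nonzero locally finite Borel measure on ℝ^d whose lower packing dimension is strictly larger than k. Then for every γ ∈ (0,1] there exists a constant c > 0 such that for μ-almost every x, limsup_{r→0} inf_{θ∈S^{d−1}, V∈G(d,d−k)} μ( X(x,r,V,γ) \ H(x,θ,γ) ) / μ(B(x,r)) > c, where the infimum is over all unit vectors θ and all (d−k)-dimensional linear subspaces V of ℝ^d. -/
open MeasureTheory Filter Metric Set
open scoped NNReal ENNReal RealInnerProductSpace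

/-- The upper local dimension of a measure at a point. -/
noncomputable def upperLocalDim {X : Type*} [MetricSpace X] [MeasurableSpace X]
    (μ : Measure X) (x : X) : EReal :=
  Filter.limsup (fun r : ℝ =>
    ((Real.log (μ (Metric.ball x r)).toReal / Real.log r : ℝ) : EReal))
    (nhdsWithin 0 (Set.Ioi 0))

/-- The lower packing dimension of a measure: the `μ`-essential infimum of the upper
local dimensions. -/
noncomputable def lowerPackingDim {X : Type*} [MetricSpace X] [MeasurableSpace X]
    (μ : Measure X) : EReal :=
  essInf (upperLocalDim μ) μ

/-- The cone `X(x,r,V,γ) = {y ∈ B(x,r) : dist(y−x,V) < γ|y−x|}`. -/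
def coneX {d : ℕ} (x : EuclideanSpace ℝ (Fin d)) (r : ℝ)
    (V : Submodule ℝ (EuclideanSpace ℝ (Fin d))) (γ : ℝ) :
    Set (EuclideanSpace ℝ (Fin d)) :=
  {y ∈ Metric.ball x r | Metric.infDist (y - x) (V : Set (EuclideanSpace ℝ (Fin d))) < γ * ‖y - x‖}

/-- The almost half-space `H(x,θ,γ) = {y : (y−x)·θ > γ|y−x|}`. -/
def halfSpaceH {d : ℕ} (x θ : EuclideanSpace ℝ (Fin d)) (γ : ℝ) :
    Set (EuclideanSpace ℝ (Fin d)) :=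
  {y | γ * ‖y - x‖ < ⟪y - x, θ⟫}

lemma frame_of_subspace {d k : ℕ} (hkd : k < d)
    (V : Submodule ℝ (EuclideanSpace ℝ (Fin d))) (hV : Module.finrank ℝ V = d - k) :
    ∃ e : Fin k → EuclideanSpace ℝ (Fin d), (∀ i, ‖e i‖ = 1) ∧
      ∀ v, Metric.infDist v (V : Set (EuclideanSpace ℝ (Fin d))) ≤ ∑ i, |⟪v, e i⟫| := by
  have h1 : Module.finrank ℝ Vᗮ = k := by
    have := Submodule.finrank_add_finrank_orthogonal V
    rw [finrank_euclideanSpace, Fintype.card_fin] at this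
    omega
  let b := (stdOrthonormalBasis ℝ Vᗮ).reindex (finCongr h1)
  refine ⟨fun i => (b i : EuclideanSpace ℝ (Fin d)), fun i => ?_, fun v => ?_⟩
  · have := b.orthonormal.1 i
    exact this
  · have h2 : Metric.infDist v (V : Set (EuclideanSpace ℝ (Fin d))) ≤ dist v (V.starProjection v) :=
      Metric.infDist_le_dist_of_mem (Submodule.starProjection_apply_mem V v)
    have h3 : v - V.starProjection v = Vᗮ.starProjection v := by
      rw [Submodule.starProjection_orthogonal_val]
    rw [dist_eq_norm, h3] at h2
    refine h2.trans ?_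
    have h4 : Vᗮ.starProjection v = ((Vᗮ.orthogonalProjectionOnto v : Vᗮ) : EuclideanSpace ℝ (Fin d)) := rfl
    rw [h4]
    have h5 := b.sum_repr' (Vᗮ.orthogonalProjectionOnto v)
    rw [← h5, ← Submodule.coe_norm]
    refine (norm_sum_le _ _).trans ?_
    refine Finset.sum_le_sum fun i _ => ?_
    rw [norm_smul, b.orthonormal.1 i, mul_one, Real.norm_eq_abs]
    rw [Submodule.inner_orthogonalProjectionOnto_eq_of_mem_left, real_inner_comm]

lemma sphere_net (d : ℕ) {η : ℝ} (hη : 0 < η) :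
    ∃ (m : ℕ) (u : Fin m → EuclideanSpace ℝ (Fin d)), (∀ i, ‖u i‖ = 1) ∧
      ∀ e : EuclideanSpace ℝ (Fin d), ‖e‖ = 1 → ∃ i, ‖e - u i‖ < η := by
  obtain ⟨t, ht, hf, hc⟩ := finite_cover_balls_of_compact
    (isCompact_sphere (0 : EuclideanSpace ℝ (Fin d)) 1) hη
  lift t to Finset (EuclideanSpace ℝ (Fin d)) using hf
  refine ⟨t.card, fun i => (t.equivFin.symm i : EuclideanSpace ℝ (Fin d)), fun i => ?_, fun e he => ?_⟩
  · have := ht (t.equivFin.symm i).2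
    simpa using this
  · have h1 : e ∈ sphere (0 : EuclideanSpace ℝ (Fin d)) 1 := by simpa using he
    have h2 := hc h1
    simp only [mem_iUnion] at h2
    obtain ⟨y, hy, hy2⟩ := h2
    refine ⟨t.equivFin ⟨y, hy⟩, ?_⟩
    simpa [dist_eq_norm] using hy2

lemma covering (d : ℕ) {ε : ℝ} (hε : 0 < ε) :
    ∃ D : ℕ, ∀ (x : EuclideanSpace ℝ (Fin d)) (r : ℝ), 0 < r →
      ∀ A : Set (EuclideanSpace ℝ (Fin d)), A ⊆ ball x r →
      ∃ F : Finset (EuclideanSpace ℝ (Fin d)), (F : Set _) ⊆ A ∧ F.card ≤ D ∧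
        ∀ a ∈ A, ∃ y ∈ F, dist a y < ε * r := by
  classical
  obtain ⟨t, ht, hf, hc⟩ := finite_cover_balls_of_compact
    (isCompact_closedBall (0 : EuclideanSpace ℝ (Fin d)) 1) (half_pos hε)
  lift t to Finset (EuclideanSpace ℝ (Fin d)) using hf
  refine ⟨t.card, fun x r hr A hA => ?_⟩
  let g : EuclideanSpace ℝ (Fin d) → EuclideanSpace ℝ (Fin d) := fun z =>
    if h : ∃ a ∈ A, dist a (x + r • z) < ε / 2 * r then h.choose else x
  let t' := t.filter (fun z => ∃ a ∈ A, dist a (x + r • z) < ε / 2 * r)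
  refine ⟨t'.image g, ?_, Finset.card_image_le.trans (Finset.card_filter_le _ _), ?_⟩
  · intro y hy
    simp only [Finset.coe_image, mem_image, Finset.mem_coe, t', Finset.mem_filter] at hy
    obtain ⟨z, ⟨_, hz⟩, rfl⟩ := hy
    simp only [g, dif_pos hz]
    exact hz.choose_spec.1
  · intro a ha
    have h1 : r⁻¹ • (a - x) ∈ closedBall (0 : EuclideanSpace ℝ (Fin d)) 1 := by
      have := hA ha
      rw [mem_ball, dist_eq_norm] at this
      rw [mem_closedBall, dist_zero_right, norm_smul, Real.norm_eq_abs, abs_of_pos (inv_pos.2 hr)]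
      rw [inv_mul_le_iff₀ hr]; linarith
    have h2 := hc h1
    simp only [mem_iUnion] at h2
    obtain ⟨z, hz, hz2⟩ := h2
    have h3 : dist a (x + r • z) < ε / 2 * r := by
      rw [mem_ball, dist_eq_norm] at hz2
      have : a - (x + r • z) = r • (r⁻¹ • (a - x) - z) := by
        rw [smul_sub, smul_smul, mul_inv_cancel₀ hr.ne', one_smul]; abel
      rw [dist_eq_norm, this, norm_smul, Real.norm_eq_abs, abs_of_pos hr]
      nlinarith
    have h4 : ∃ a ∈ A, dist a (x + r • z) < ε / 2 * r := ⟨a, ha, h3⟩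
    refine ⟨g z, Finset.mem_image_of_mem _ (Finset.mem_filter.2 ⟨hz, h4⟩), ?_⟩
    simp only [g, dif_pos h4]
    have h5 := h4.choose_spec.2
    have h6 := dist_triangle_right a h4.choose (x + r • z)
    linarith

set_option maxHeartbeats 1000000 in
lemma geometric {d k : ℕ} (hk : 1 ≤ k) (hkd : k < d) {γ : ℝ} (hγ : 0 < γ) (hγ1 : γ ≤ 1) :
    ∃ L C : ℝ, 0 < L ∧ 0 < C ∧ ∀ δ : ℝ, 0 < δ → δ ≤ 2 / 5 → ∀ r : ℝ, 0 < r →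
      ∀ (x : EuclideanSpace ℝ (Fin d)) (P : Finset (EuclideanSpace ℝ (Fin d)))
        (V : EuclideanSpace ℝ (Fin d) → Submodule ℝ (EuclideanSpace ℝ (Fin d))),
        (∀ y ∈ P, dist y x < r) →
        (∀ y ∈ P, ∀ z ∈ P, y ≠ z → L * δ * r ≤ dist y z) →
        (∀ y ∈ P, Module.finrank ℝ (V y) = d - k) →
        C / δ ^ k < P.card →
        ∃ y₀ ∈ P, ∃ y₁ ∈ P, ∃ y₂ ∈ P,
          ball y₁ (5 * δ * r) ⊆ coneX y₀ (4 * r) (V y₀) γ ∧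
          ball y₂ (5 * δ * r) ⊆ coneX y₀ (4 * r) (V y₀) γ ∧
          ∀ θ : EuclideanSpace ℝ (Fin d), ‖θ‖ = 1 →
            Disjoint (ball y₁ (5 * δ * r)) (halfSpaceH y₀ θ γ) ∨
            Disjoint (ball y₂ (5 * δ * r)) (halfSpaceH y₀ θ γ) := by
  classical
  have hk' : (1 : ℝ) ≤ k := by exact_mod_cast hk
  set η : ℝ := γ / (4 * k) with hηdef
  have hη : 0 < η := by positivity
  have hkη : k * η = γ / 4 := by rw [hηdef]; field_simp
  have hη4 : η ≤ γ / 4 := by nlinarith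
  obtain ⟨m, u, hu1, hu⟩ := sphere_net d hη
  have hm : 0 < m := by
    obtain ⟨e, he⟩ : ∃ e : EuclideanSpace ℝ (Fin d), ‖e‖ = 1 :=
      ⟨EuclideanSpace.single ⟨0, by omega⟩ 1, by simp⟩
    obtain ⟨i, _⟩ := hu e he
    exact (Nat.zero_le _).trans_lt i.2
  have : Nonempty (Fin m) := ⟨⟨0, hm⟩⟩
  choose! c hc using hu
  set L : ℝ := 5 + 30 * k / γ with hL
  have hLγ : (L - 5) * γ = 30 * k := by rw [hL]; field_simp; ring
  have hL0 : 0 < L := by positivity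
  refine ⟨L, (3 * m : ℝ) ^ k * 2 ^ m, hL0, by positivity, ?_⟩
  intro δ hδ hδ1 r hr x P V hPx hsep hV hcard
  have hδr : 0 < δ * r := by positivity
  -- frames
  have hfr : ∀ y, ∃ e : Fin k → EuclideanSpace ℝ (Fin d), y ∈ P → (∀ i, ‖e i‖ = 1) ∧
      ∀ v, Metric.infDist v (V y : Set (EuclideanSpace ℝ (Fin d))) ≤ ∑ i, |⟪v, e i⟫| := by
    intro y
    by_cases hy : y ∈ P
    · obtain ⟨e, he⟩ := frame_of_subspace hkd (V y) (hV y hy)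
      exact ⟨e, fun _ => he⟩
    · exact ⟨0, fun h => absurd h hy⟩
  choose e he using hfr
  let M : ℕ := ⌊2 / δ⌋₊ + 1
  let cell : EuclideanSpace ℝ (Fin d) → Fin m → ℕ := fun y i =>
    ⌊(⟪y - x, u i⟫ + r) / (δ * r)⌋₊
  have hip : ∀ y ∈ P, ∀ i, |⟪y - x, u i⟫| < r := by
    intro y hy i
    have h1 := abs_real_inner_le_norm (y - x) (u i)
    have h2 := hPx y hy
    rw [dist_eq_norm] at h2
    rw [hu1, mul_one] at h1
    linarith
  let lab : EuclideanSpace ℝ (Fin d) → (Fin k → Fin m × ℕ) := fun y i =>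
    (c (e y i), cell y (c (e y i)))
  let T : Finset (Fin k → Fin m × ℕ) := Fintype.piFinset fun _ => Finset.univ ×ˢ Finset.range M
  have hmaps : ∀ y ∈ P, lab y ∈ T := by
    intro y hy
    simp only [T, Fintype.mem_piFinset, Finset.mem_product, Finset.mem_univ, true_and,
      Finset.mem_range, lab, M, cell]
    intro i
    rw [Nat.lt_succ_iff]
    apply Nat.floor_le_floor
    rw [div_le_div_iff₀ hδr hδ]
    have := abs_lt.1 (hip y hy (c (e y i)))
    nlinarith
  have hTcard : T.card = (m * M) ^ k := by
    simp [T, Fintype.card_piFinset]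
  have hMle : (M : ℝ) ≤ 3 / δ := by
    have h1 : (⌊2 / δ⌋₊ : ℝ) ≤ 2 / δ := Nat.floor_le (by positivity)
    have h2 : 1 ≤ 1 / δ := by rw [le_div_iff₀ hδ]; linarith
    have h3 : 3 / δ = 2 / δ + 1 / δ := by ring
    simp only [M]; push_cast; linarith
  have hcard2 : T.card * 2 ^ m < P.card := by
    have h1 : ((m * M : ℝ)) ^ k ≤ (m * (3 / δ)) ^ k := by gcongr
    have h2 : ((T.card * 2 ^ m : ℕ) : ℝ) < P.card := by
      rw [hTcard]; push_cast
      refine lt_of_le_of_lt ?_ hcard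
      calc ((m * M : ℝ)) ^ k * 2 ^ m ≤ (m * (3 / δ)) ^ k * 2 ^ m := by gcongr
        _ = (3 * m : ℝ) ^ k * 2 ^ m / δ ^ k := by
          rw [show (m * (3 / δ) : ℝ) = 3 * m / δ by ring, div_pow]; ring
    exact_mod_cast h2
  obtain ⟨l, hl, hlcard⟩ := Finset.exists_lt_card_fiber_of_mul_lt_card_of_maps_to hmaps hcard2
  set Q := P.filter (fun y => lab y = l) with hQ
  -- direction colours
  let dir : EuclideanSpace ℝ (Fin d) → EuclideanSpace ℝ (Fin d) → Fin m := fun a b =>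
    c (‖b - a‖⁻¹ • (b - a))
  let S : EuclideanSpace ℝ (Fin d) → Finset (Fin m) := fun a =>
    (Q.erase a).image (dir a)
  have hS : ∃ a ∈ Q, ∃ b ∈ Q, a ≠ b ∧ S a = S b := by
    apply Finset.exists_ne_map_eq_of_card_lt_of_maps_to (t := Finset.univ)
    · simpa using hlcard
    · intro a _; simp
  obtain ⟨a, ha, b, hb, hab, hSab⟩ := hS
  have h1 : dir a b ∈ S b := by
    rw [← hSab]
    exact Finset.mem_image_of_mem _ (Finset.mem_erase.2 ⟨hab.symm, hb⟩)
  obtain ⟨z, hz, hdir⟩ := Finset.mem_image.1 h1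
  obtain ⟨hzb, hzQ⟩ := Finset.mem_erase.1 hz
  have hdirspec : ∀ p q, p ≠ q → ‖(q - p) - ‖q - p‖ • u (dir p q)‖ ≤ η * ‖q - p‖ := by
    intro p q hpq
    have h0 : 0 < ‖q - p‖ := norm_pos_iff.2 (sub_ne_zero.2 hpq.symm)
    have h2 : ‖‖q - p‖⁻¹ • (q - p)‖ = 1 := by
      rw [norm_smul, norm_inv, norm_norm, inv_mul_cancel₀ h0.ne']
    have h3 := hc _ h2
    have h4 : (q - p) - ‖q - p‖ • u (dir p q) = ‖q - p‖ • (‖q - p‖⁻¹ • (q - p) - u (dir p q)) := by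
      rw [smul_sub, smul_smul, mul_inv_cancel₀ h0.ne', one_smul]
    rw [h4, norm_smul, norm_norm]
    have h5 : ‖‖q - p‖⁻¹ • (q - p) - u (dir p q)‖ < η := h3
    nlinarith
  have hQP : ∀ y ∈ Q, y ∈ P := fun y hy => (Finset.mem_filter.1 hy).1
  have hQl : ∀ y ∈ Q, lab y = l := fun y hy => (Finset.mem_filter.1 hy).2
  -- cone inclusion
  have hcone : ∀ p ∈ Q, ∀ q ∈ Q, p ≠ q → ball q (5 * δ * r) ⊆ coneX p (4 * r) (V p) γ := by
    intro p hp q hq hpq w hw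
    rw [mem_ball, dist_eq_norm] at hw
    have hs := hsep q (hQP q hq) p (hQP p hp) hpq.symm
    rw [dist_eq_norm] at hs
    have hwp : (L - 5) * (δ * r) ≤ ‖w - p‖ := by
      have := norm_sub_norm_le (q - p) (q - w)
      have h2 : q - p - (q - w) = w - p := by abel
      rw [h2, norm_sub_rev q w] at this
      nlinarith
    have hwp0 : 0 < ‖w - p‖ := by
      have : 0 < (L - 5) := by rw [hL]; simp; positivity
      have : 0 < (L - 5) * (δ * r) := by positivity
      linarith
    refine ⟨?_, ?_⟩
    · have d1 := hPx p (hQP p hp)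
      have d2 := hPx q (hQP q hq)
      rw [mem_ball]
      have d3 := dist_triangle w q p
      have d4 := dist_triangle_right q p x
      rw [dist_eq_norm w q] at d3
      nlinarith
    · obtain ⟨hen, hev⟩ := he p (hQP p hp)
      refine (hev (w - p)).trans_lt ?_
      have hterm : ∀ i ∈ (Finset.univ : Finset (Fin k)),
          |⟪w - p, e p i⟫| ≤ 6 * (δ * r) + η * ‖w - p‖ := by
        intro i _
        have hlab : lab p i = lab q i := by rw [hQl p hp, hQl q hq]
        simp only [lab, Prod.mk.injEq] at hlab
        obtain ⟨hl1, hl2⟩ := hlab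
        rw [← hl1] at hl2
        set j := c (e p i) with hj
        have e1 : |⟪w - p, e p i - u j⟫| ≤ ‖w - p‖ * η := by
          refine (abs_real_inner_le_norm _ _).trans ?_
          have := hc (e p i) (hen i)
          gcongr
        have e2 : |⟪w - q, u j⟫| ≤ 5 * δ * r := by
          refine (abs_real_inner_le_norm _ _).trans ?_
          rw [hu1, mul_one]; exact hw.le
        have e3 : |⟪q - p, u j⟫| ≤ δ * r := by
          have f1 := abs_lt.1 (hip p (hQP p hp) j)
          have f2 := abs_lt.1 (hip q (hQP q hq) j)
          have g1 := Nat.floor_le (a := (⟪p - x, u j⟫ + r) / (δ * r)) (by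
            apply div_nonneg <;> linarith)
          have g2 := Nat.floor_le (a := (⟪q - x, u j⟫ + r) / (δ * r)) (by
            apply div_nonneg <;> linarith)
          have g3 := Nat.lt_floor_add_one ((⟪p - x, u j⟫ + r) / (δ * r))
          have g4 := Nat.lt_floor_add_one ((⟪q - x, u j⟫ + r) / (δ * r))
          simp only [cell] at hl2
          rw [hl2] at g1 g3
          have e4 : ⟪q - p, u j⟫ = ⟪q - x, u j⟫ - ⟪p - x, u j⟫ := by
            rw [← inner_sub_left]; congr 1; abel
          rw [le_div_iff₀ hδr] at g1 g2
          rw [div_lt_iff₀ hδr] at g3 g4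
          rw [e4, abs_le]
          constructor <;> linarith
        have e5 : ⟪w - p, e p i⟫ = ⟪w - p, e p i - u j⟫ + ⟪w - q, u j⟫ + ⟪q - p, u j⟫ := by
          rw [inner_sub_right, add_assoc, ← inner_add_left, sub_add_sub_cancel]; ring
        rw [e5]
        have := abs_add_three (⟪w - p, e p i - u j⟫) (⟪w - q, u j⟫) (⟪q - p, u j⟫)
        linarith
      refine (Finset.sum_le_sum hterm).trans_lt ?_
      rw [Finset.sum_const, Finset.card_univ, Fintype.card_fin, nsmul_eq_mul]
      have k1 : 30 * k * (δ * r) ≤ γ * ‖w - p‖ := by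
        calc 30 * k * (δ * r) = γ * ((L - 5) * (δ * r)) := by rw [← hLγ]; ring
          _ ≤ _ := by gcongr
      have k2 : k * (6 * (δ * r) + η * ‖w - p‖) = 6 * k * (δ * r) + γ / 4 * ‖w - p‖ := by
        rw [← hkη]; ring
      rw [k2]
      nlinarith [mul_pos hγ hwp0]
  -- half-space avoidance
  have hhalf : ∀ p ∈ Q, ∀ q ∈ Q, p ≠ q → ∀ v θ : EuclideanSpace ℝ (Fin d), ‖θ‖ = 1 →
      ⟪v, θ⟫ ≤ 0 → ‖(q - p) - ‖q - p‖ • v‖ ≤ η * ‖q - p‖ →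
      Disjoint (ball q (5 * δ * r)) (halfSpaceH p θ γ) := by
    intro p hp q hq hpq v θ hθ hv hqv
    rw [Set.disjoint_left]
    intro w hw hwH
    rw [mem_ball, dist_eq_norm] at hw
    simp only [halfSpaceH, mem_ofPred_eq] at hwH
    have hs := hsep q (hQP q hq) p (hQP p hp) hpq.symm
    rw [dist_eq_norm] at hs
    have n0 : 0 < ‖q - p‖ := norm_pos_iff.2 (sub_ne_zero.2 hpq.symm)
    have a1 : ⟪w - p, θ⟫ = ⟪w - q, θ⟫ + ⟪(q - p) - ‖q - p‖ • v, θ⟫ + ‖q - p‖ * ⟪v, θ⟫ := by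
      rw [inner_sub_left (q - p), real_inner_smul_left]
      have : ⟪w - p, θ⟫ = ⟪w - q, θ⟫ + ⟪q - p, θ⟫ := by
        rw [← inner_add_left, sub_add_sub_cancel]
      rw [this]; ring
    have a2 : ⟪w - q, θ⟫ ≤ ‖w - q‖ := by
      have := real_inner_le_norm (w - q) θ
      rwa [hθ, mul_one] at this
    have a3 : ⟪(q - p) - ‖q - p‖ • v, θ⟫ ≤ η * ‖q - p‖ := by
      have := real_inner_le_norm ((q - p) - ‖q - p‖ • v) θ
      rw [hθ, mul_one] at this
      linarith
    have a4 : ‖q - p‖ * ⟪v, θ⟫ ≤ 0 := mul_nonpos_of_nonneg_of_nonpos n0.le hv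
    have a5 : ‖q - p‖ - ‖w - q‖ ≤ ‖w - p‖ := by
      have := norm_sub_norm_le (q - p) (q - w)
      have h2 : q - p - (q - w) = w - p := by abel
      rwa [h2, norm_sub_rev q w] at this
    have a6 : 30 * (δ * r) ≤ γ * ‖q - p‖ := by
      calc 30 * (δ * r) ≤ 30 * k * (δ * r) := by
            have := mul_le_mul_of_nonneg_right hk' hδr.le
            linarith
        _ = γ * ((L - 5) * (δ * r)) := by rw [← hLγ]; ring
        _ ≤ γ * (L * δ * r) := by
            apply mul_le_mul_of_nonneg_left _ hγ.le
            linarith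
        _ ≤ _ := by gcongr
    have a7 : γ * (‖q - p‖ - ‖w - q‖) ≤ γ * ‖w - p‖ := by gcongr
    have a8 : γ * ‖w - q‖ ≤ ‖w - q‖ := mul_le_of_le_one_left (norm_nonneg _) hγ1
    have a9 : η * ‖q - p‖ ≤ γ / 4 * ‖q - p‖ := by gcongr
    have a10 := mul_pos hγ n0
    linarith
  refine ⟨b, hQP b hb, a, hQP a ha, z, hQP z hzQ, hcone b hb a ha hab.symm,
    hcone b hb z hzQ hzb.symm, ?_⟩
  intro θ hθ
  rcases le_total 0 ⟪u (dir a b), θ⟫ with h | h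
  · left
    refine hhalf b hb a ha hab.symm (-u (dir a b)) θ hθ (by rw [inner_neg_left]; linarith) ?_
    have := hdirspec a b hab
    rw [norm_sub_rev a b]
    have h2 : a - b - ‖b - a‖ • -u (dir a b) = -(b - a - ‖b - a‖ • u (dir a b)) := by
      rw [smul_neg]; abel
    rw [h2, norm_neg]; exact this
  · right
    refine hhalf b hb z hzQ hzb.symm (u (dir a b)) θ hθ h ?_
    rw [← hdir]
    exact hdirspec b z hzb.symm

lemma max_separated {X : Type*} [PseudoMetricSpace X] (A : Set X) (ρ N : ℝ) (hρ : 0 < ρ)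
    (h : ∀ P : Finset X, (∀ y ∈ P, y ∈ A) → (∀ y ∈ P, ∀ z ∈ P, y ≠ z → ρ ≤ dist y z) →
      (P.card : ℝ) ≤ N) :
    ∃ G : Finset X, (∀ y ∈ G, y ∈ A) ∧ (G.card : ℝ) ≤ N ∧ ∀ a ∈ A, ∃ g ∈ G, dist a g < ρ := by
  classical
  let S : Set ℕ := {n | ∃ P : Finset X, (∀ y ∈ P, y ∈ A) ∧
    (∀ y ∈ P, ∀ z ∈ P, y ≠ z → ρ ≤ dist y z) ∧ P.card = n}
  have hne : S.Nonempty := ⟨0, ∅, by simp, by simp, by simp⟩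
  have hbdd : BddAbove S := by
    refine ⟨⌊N⌋₊, ?_⟩
    rintro n ⟨P, h1, h2, rfl⟩
    exact Nat.le_floor (h P h1 h2)
  obtain ⟨P, h1, h2, h3⟩ := Nat.sSup_mem hne hbdd
  refine ⟨P, h1, h P h1 h2, ?_⟩
  intro a ha
  by_contra! hcon
  have haP : a ∉ P := fun hh => by
    have := hcon a hh
    rw [dist_self] at this
    linarith
  have : (insert a P).card ≤ sSup S := by
    apply le_csSup hbdd
    refine ⟨insert a P, ?_, ?_, rfl⟩
    · intro y hy
      rcases Finset.mem_insert.1 hy with rfl | hy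
      · exact ha
      · exact h1 y hy
    · intro y hy z hz hyz
      rcases Finset.mem_insert.1 hy with rfl | hy' <;>
        rcases Finset.mem_insert.1 hz with rfl | hz'
      · exact absurd rfl hyz
      · exact hcon z hz'
      · rw [dist_comm]; exact hcon y hy'
      · exact h2 y hy' z hz' hyz
  rw [Finset.card_insert_of_notMem haP, h3] at this
  omega

/-- `A` consists of points where the conical densities are small at all scales below `R`. -/
def WeakSet {d : ℕ} (k : ℕ) (γ c R : ℝ) (μ : Measure (EuclideanSpace ℝ (Fin d)))
    (A : Set (EuclideanSpace ℝ (Fin d))) : Prop :=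
  ∀ y ∈ A, ∀ r : ℝ, 0 < r → r < R → ∃ (θ : EuclideanSpace ℝ (Fin d))
    (V : Submodule ℝ (EuclideanSpace ℝ (Fin d))), ‖θ‖ = 1 ∧ Module.finrank ℝ V = d - k ∧
    μ.real (coneX y r V γ \ halfSpaceH y θ γ) ≤ c * μ.real (ball y r)

lemma real_ball_mono {d : ℕ} (μ : Measure (EuclideanSpace ℝ (Fin d))) [IsLocallyFiniteMeasure μ]
    {S : Set (EuclideanSpace ℝ (Fin d))} {y : EuclideanSpace ℝ (Fin d)} {r : ℝ}
    (h : S ⊆ ball y r) : μ.real S ≤ μ.real (ball y r) :=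
  measureReal_mono h measure_ball_lt_top.ne

lemma cover_step {d k : ℕ} (hk : 1 ≤ k) (hkd : k < d) {γ : ℝ} (hγ : 0 < γ) (hγ1 : γ ≤ 1)
    {s t : ℝ} (hs : k < s) (ht : 0 < t) :
    ∃ δ c : ℝ, 0 < δ ∧ δ ≤ 2 / 5 ∧ 0 < c ∧
      ∀ (μ : Measure (EuclideanSpace ℝ (Fin d))) [IsLocallyFiniteMeasure μ]
        (A : Set (EuclideanSpace ℝ (Fin d))) (R : ℝ), WeakSet k γ c R μ A →
        ∀ (x : EuclideanSpace ℝ (Fin d)) (r : ℝ), 0 < r → 4 * r < R →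
        ∃ F : Finset (EuclideanSpace ℝ (Fin d)), (∀ y ∈ F, y ∈ A) ∧
          (∀ a ∈ A, dist a x < r → ∃ y ∈ F, dist a y < δ * r) ∧
          ∑ y ∈ F, μ.real (ball y (5 * (δ * r))) ^ t ≤
            (δ ^ (-s) / 2) * μ.real (ball x (5 * r)) ^ t := by
  classical
  obtain ⟨L, C, hL, hC, hgeo⟩ := geometric hk hkd hγ hγ1
  obtain ⟨D, hD⟩ := covering d (inv_pos.2 hL)
  have hδex : ∃ δ : ℝ, 0 < δ ∧ δ ≤ 2 / 5 ∧ 4 * (D * C) * δ ^ (s - k) ≤ 1 := by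
    have h1 : Tendsto (fun δ : ℝ => 4 * (D * C) * δ ^ (s - k)) (nhdsWithin 0 (Ioi 0)) (nhds 0) := by
      have h2 : Tendsto (fun δ : ℝ => δ ^ (s - k)) (nhdsWithin 0 (Ioi 0)) (nhds 0) := by
        have := (Real.continuousAt_rpow_const 0 (s - k) (Or.inr (by linarith))).tendsto
        rw [Real.zero_rpow (by linarith)] at this
        exact this.mono_left nhdsWithin_le_nhds
      simpa using h2.const_mul (4 * (D * C))
    have h2 := h1.eventually (eventually_le_nhds (zero_lt_one))
    have h3 : ∀ᶠ δ : ℝ in nhdsWithin 0 (Ioi 0), δ ∈ Ioc (0 : ℝ) (2 / 5) :=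
      Ioc_mem_nhdsGT (by norm_num)
    obtain ⟨δ, h4, h5⟩ := (h2.and h3).exists
    exact ⟨δ, h5.1, h5.2, h4⟩
  obtain ⟨δ, hδ, hδ1, hδC⟩ := hδex
  obtain ⟨D', hD'⟩ := covering d hδ
  have hδs : 0 < δ ^ (-s) := Real.rpow_pos_of_pos hδ _
  have hgoodnum : D * (C / δ ^ k) ≤ δ ^ (-s) / 4 := by
    have h1 : δ ^ (s - k) = δ ^ s / δ ^ k := by
      rw [Real.rpow_sub hδ, Real.rpow_natCast]
    rw [h1] at hδC
    rw [Real.rpow_neg hδ.le]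
    have h2 : 0 < δ ^ s := Real.rpow_pos_of_pos hδ _
    have h3 : D * (C / δ ^ k) = (4 * (D * C) * (δ ^ s / δ ^ k)) * ((δ ^ s)⁻¹ / 4) := by
      field_simp
    rw [h3]
    exact mul_le_of_le_one_left (by positivity) hδC
  set q : ℝ := δ ^ (-s) / (4 * (D' + 1)) with hq
  have hq0 : 0 < q := by positivity
  refine ⟨δ, q ^ (1 / t), hδ, hδ1, by positivity, ?_⟩
  intro μ _ A R hA x r hr hrR
  set c : ℝ := q ^ (1 / t) with hc
  have hct : c ^ t = q := by
    rw [hc, ← Real.rpow_mul hq0.le, one_div_mul_cancel ht.ne', Real.rpow_one]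
  have hc0 : 0 < c := by positivity
  have hδr : 0 < δ * r := by positivity
  set m : ℝ := μ.real (ball x (5 * r)) with hm
  have hm0 : 0 ≤ m := measureReal_nonneg
  let good : Set (EuclideanSpace ℝ (Fin d)) :=
    {y | y ∈ A ∧ dist y x < r ∧ c * m < μ.real (ball y (5 * (δ * r)))}
  let bad : Set (EuclideanSpace ℝ (Fin d)) :=
    {y | y ∈ A ∧ dist y x < r ∧ μ.real (ball y (5 * (δ * r))) ≤ c * m}
  have hball : ∀ y, dist y x < r → ball y (5 * (δ * r)) ⊆ ball x (5 * r) := by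
    intro y hy
    apply ball_subset_ball'
    nlinarith
  have hsepcard : ∀ P : Finset (EuclideanSpace ℝ (Fin d)), (∀ y ∈ P, y ∈ good) →
      (∀ y ∈ P, ∀ z ∈ P, y ≠ z → L * δ * r ≤ dist y z) → (P.card : ℝ) ≤ C / δ ^ k := by
    intro P hP hsep
    by_contra! hcon
    have hex : ∀ y, ∃ (θ : EuclideanSpace ℝ (Fin d))
        (V : Submodule ℝ (EuclideanSpace ℝ (Fin d))), y ∈ P → ‖θ‖ = 1 ∧
        Module.finrank ℝ V = d - k ∧
        μ.real (coneX y (4 * r) V γ \ halfSpaceH y θ γ) ≤ c * μ.real (ball y (4 * r)) := by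
      intro y
      by_cases hy : y ∈ P
      · obtain ⟨θ, V, h⟩ := hA y (hP y hy).1 (4 * r) (by linarith) hrR
        exact ⟨θ, V, fun _ => h⟩
      · exact ⟨0, ⊥, fun h => absurd h hy⟩
    choose θ V hθV using hex
    obtain ⟨y₀, h0, y₁, h1, y₂, h2, hc1, hc2, hdis⟩ := hgeo δ hδ hδ1 r hr x P V
      (fun y hy => (hP y hy).2.1) hsep (fun y hy => (hθV y hy).2.1) hcon
    obtain ⟨hθ0, _, hle⟩ := hθV y₀ h0
    have hle2 : μ.real (coneX y₀ (4 * r) (V y₀) γ \ halfSpaceH y₀ (θ y₀) γ) ≤ c * m := by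
      refine hle.trans ?_
      refine mul_le_mul_of_nonneg_left ?_ hc0.le
      apply real_ball_mono
      apply ball_subset_ball'
      have := (hP y₀ h0).2.1
      linarith
    have key : ∀ y ∈ P, ball y (5 * δ * r) ⊆ coneX y₀ (4 * r) (V y₀) γ →
        Disjoint (ball y (5 * δ * r)) (halfSpaceH y₀ (θ y₀) γ) → False := by
      intro y hy hsub hd
      have h3 : ball y (5 * δ * r) ⊆ coneX y₀ (4 * r) (V y₀) γ \ halfSpaceH y₀ (θ y₀) γ :=
        subset_sdiff.2 ⟨hsub, hd⟩
      have h4 := (hP y hy).2.2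
      rw [← mul_assoc] at h4
      have h5 : μ.real (ball y (5 * δ * r)) ≤
          μ.real (coneX y₀ (4 * r) (V y₀) γ \ halfSpaceH y₀ (θ y₀) γ) := by
        refine measureReal_mono h3 ?_
        refine ne_top_of_le_ne_top (measure_ball_lt_top (x := y₀) (r := 4 * r)).ne (measure_mono ?_)
        exact fun z hz => hz.1.1
      linarith
    rcases hdis (θ y₀) hθ0 with h | h
    · exact key y₁ h1 hc1 h
    · exact key y₂ h2 hc2 h
  obtain ⟨G, hG1, hG2, hG3⟩ := max_separated good (L * δ * r) (C / δ ^ k) (by positivity) hsepcard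
  have hcov : ∀ g, ∃ F : Finset (EuclideanSpace ℝ (Fin d)),
      (F : Set _) ⊆ good ∩ ball g (L * δ * r) ∧ F.card ≤ D ∧
        ∀ a ∈ good ∩ ball g (L * δ * r), ∃ y ∈ F, dist a y < L⁻¹ * (L * δ * r) :=
    fun g => hD g (L * δ * r) (by positivity) _ inter_subset_right
  choose Fg hFg1 hFg2 hFg3 using hcov
  obtain ⟨Fb, hFb1, hFb2, hFb3⟩ := hD' x r hr bad (fun y hy => hy.2.1)
  have hLinv : L⁻¹ * (L * δ * r) = δ * r := by field_simp
  refine ⟨G.biUnion Fg ∪ Fb, ?_, ?_, ?_⟩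
  · intro y hy
    rcases Finset.mem_union.1 hy with hy | hy
    · obtain ⟨g, _, hy⟩ := Finset.mem_biUnion.1 hy
      exact (hFg1 g hy).1.1
    · exact (hFb1 hy).1
  · intro a ha hax
    rcases lt_or_ge (c * m) (μ.real (ball a (5 * (δ * r)))) with h | h
    · have hag : a ∈ good := ⟨ha, hax, h⟩
      obtain ⟨g, hg, hag2⟩ := hG3 a hag
      obtain ⟨y, hy, hay⟩ := hFg3 g a ⟨hag, hag2⟩
      rw [hLinv] at hay
      exact ⟨y, Finset.mem_union_left _ (Finset.mem_biUnion.2 ⟨g, hg, hy⟩), hay⟩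
    · obtain ⟨y, hy, hay⟩ := hFb3 a ⟨ha, hax, h⟩
      exact ⟨y, Finset.mem_union_right _ hy, hay⟩
  · have hmt : 0 ≤ m ^ t := Real.rpow_nonneg hm0 _
    have s1 : ∑ y ∈ G.biUnion Fg, μ.real (ball y (5 * (δ * r))) ^ t ≤ (δ ^ (-s) / 4) * m ^ t := by
      have b1 : ∀ y ∈ G.biUnion Fg, μ.real (ball y (5 * (δ * r))) ^ t ≤ m ^ t := by
        intro y hy
        obtain ⟨g, _, hy⟩ := Finset.mem_biUnion.1 hy
        exact Real.rpow_le_rpow measureReal_nonneg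
          (real_ball_mono μ (hball y (hFg1 g hy).1.2.1)) ht.le
      refine (Finset.sum_le_card_nsmul _ _ _ b1).trans ?_
      rw [nsmul_eq_mul]
      refine mul_le_mul_of_nonneg_right ?_ hmt
      have b2 : (G.biUnion Fg).card ≤ G.card * D :=
        Finset.card_biUnion_le_card_mul _ _ _ (fun g _ => hFg2 g)
      have b3 : ((G.biUnion Fg).card : ℝ) ≤ G.card * D := by exact_mod_cast b2
      refine b3.trans (le_trans ?_ hgoodnum)
      rw [mul_comm]
      gcongr
    have s2 : ∑ y ∈ Fb, μ.real (ball y (5 * (δ * r))) ^ t ≤ (δ ^ (-s) / 4) * m ^ t := by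
      have b1 : ∀ y ∈ Fb, μ.real (ball y (5 * (δ * r))) ^ t ≤ q * m ^ t := by
        intro y hy
        rw [← hct, ← Real.mul_rpow hc0.le hm0]
        exact Real.rpow_le_rpow measureReal_nonneg (hFb1 hy).2.2 ht.le
      refine (Finset.sum_le_card_nsmul _ _ _ b1).trans ?_
      rw [nsmul_eq_mul, ← mul_assoc]
      refine mul_le_mul_of_nonneg_right ?_ hmt
      have b2 : (Fb.card : ℝ) ≤ D' + 1 := by
        have : (Fb.card : ℝ) ≤ D' := by exact_mod_cast hFb2
        linarith
      calc (Fb.card : ℝ) * q ≤ (D' + 1) * q := by gcongr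
        _ = δ ^ (-s) / 4 := by rw [hq]; field_simp
    have s3 : ∑ y ∈ G.biUnion Fg ∪ Fb, μ.real (ball y (5 * (δ * r))) ^ t ≤
        ∑ y ∈ G.biUnion Fg, μ.real (ball y (5 * (δ * r))) ^ t +
        ∑ y ∈ Fb, μ.real (ball y (5 * (δ * r))) ^ t := by
      rw [← Finset.sum_union_inter]
      have : 0 ≤ ∑ y ∈ G.biUnion Fg ∩ Fb, μ.real (ball y (5 * (δ * r))) ^ t :=
        Finset.sum_nonneg fun y _ => Real.rpow_nonneg measureReal_nonneg _
      linarith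
    linarith

lemma sum_biUnion_le' {X Y : Type*} [DecidableEq Y] (F : Finset X) (g : X → Finset Y) (f : Y → ℝ)
    (hf : ∀ y, 0 ≤ f y) : ∑ y ∈ F.biUnion g, f y ≤ ∑ x ∈ F, ∑ y ∈ g x, f y := by
  classical
  induction F using Finset.induction_on with
  | empty => simp
  | insert a F ha ih =>
    rw [Finset.biUnion_insert, Finset.sum_insert ha]
    have : ∑ y ∈ g a ∪ F.biUnion g, f y ≤ ∑ y ∈ g a, f y + ∑ y ∈ F.biUnion g, f y := by
      rw [← Finset.sum_union_inter]
      have : 0 ≤ ∑ y ∈ g a ∩ F.biUnion g, f y := Finset.sum_nonneg fun y _ => hf y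
      linarith
    linarith

lemma cover_iterate {d : ℕ} {δ r q t : ℝ} (hδ : 0 < δ) (hδ1 : δ ≤ 2 / 5) (hr : 0 < r) (hq : 0 ≤ q)
    (μ : Measure (EuclideanSpace ℝ (Fin d)))
    (A : Set (EuclideanSpace ℝ (Fin d)))
    (hstep : ∀ (x : EuclideanSpace ℝ (Fin d)) (ρ : ℝ), 0 < ρ → ρ ≤ r →
        ∃ F : Finset (EuclideanSpace ℝ (Fin d)), (∀ y ∈ F, y ∈ A) ∧
          (∀ a ∈ A, dist a x < ρ → ∃ y ∈ F, dist a y < δ * ρ) ∧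
          ∑ y ∈ F, μ.real (ball y (5 * (δ * ρ))) ^ t ≤ q * μ.real (ball x (5 * ρ)) ^ t)
    (x : EuclideanSpace ℝ (Fin d)) (n : ℕ) :
    ∃ F : Finset (EuclideanSpace ℝ (Fin d)),
      (∀ a ∈ A, dist a x < r → ∃ y ∈ F, dist a y < δ ^ n * r) ∧
      ∑ y ∈ F, μ.real (ball y (5 * (δ ^ n * r))) ^ t ≤ q ^ n * μ.real (ball x (5 * r)) ^ t := by
  classical
  induction n with
  | zero => exact ⟨{x}, by simp, by simp⟩
  | succ n ih =>
    obtain ⟨F, hF1, hF2⟩ := ih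
    have hρ : 0 < δ ^ n * r := by positivity
    have hρr : δ ^ n * r ≤ r := mul_le_of_le_one_left hr.le (pow_le_one₀ hδ.le (by linarith))
    choose g _ hg2 hg3 using fun y => hstep y (δ ^ n * r) hρ hρr
    have e : δ * (δ ^ n * r) = δ ^ (n + 1) * r := by ring
    rw [e] at hg2 hg3
    refine ⟨F.biUnion g, ?_, ?_⟩
    · intro a ha hax
      obtain ⟨y, hy, hay⟩ := hF1 a ha hax
      obtain ⟨z, hz, haz⟩ := hg2 y a ha hay
      exact ⟨z, Finset.mem_biUnion.2 ⟨y, hy, hz⟩, haz⟩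
    · refine (sum_biUnion_le' _ _ _ fun y => Real.rpow_nonneg measureReal_nonneg _).trans ?_
      refine (Finset.sum_le_sum fun y _ => hg3 y).trans ?_
      rw [← Finset.mul_sum, pow_succ, mul_comm (q ^ n), mul_assoc]
      gcongr

lemma upperLocalDim_le {d : ℕ} (μ : Measure (EuclideanSpace ℝ (Fin d)))
    [IsLocallyFiniteMeasure μ] {δ r s s₁ : ℝ} (hδ : 0 < δ) (hδ1 : δ < 1) (hr : 0 < r)
    (hs : 0 < s) (hs1 : s < s₁) (x : EuclideanSpace ℝ (Fin d))
    (h : ∀ᶠ n : ℕ in atTop, (δ ^ s) ^ n ≤ μ.real (ball x (6 * (δ ^ n * r)))) :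
    upperLocalDim μ x ≤ (s₁ : EReal) := by
  obtain ⟨N, hN⟩ := eventually_atTop.1 h
  have hK : 0 < (δ / (6 * r)) ^ s := by positivity
  have h1 : ∀ᶠ ρ : ℝ in nhdsWithin 0 (Ioi 0), ρ ^ (s₁ - s) ≤ (δ / (6 * r)) ^ s := by
    have h2 : Tendsto (fun δ : ℝ => δ ^ (s₁ - s)) (nhdsWithin 0 (Ioi 0)) (nhds 0) := by
      have := (Real.continuousAt_rpow_const 0 (s₁ - s) (Or.inr (by linarith))).tendsto
      rw [Real.zero_rpow (by linarith)] at this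
      exact this.mono_left nhdsWithin_le_nhds
    exact h2.eventually (eventually_le_nhds hK)
  have h2 : ∀ᶠ ρ : ℝ in nhdsWithin 0 (Ioi 0), ρ ∈ Ioo (0 : ℝ) (min 1 (6 * r * δ ^ N)) :=
    Ioo_mem_nhdsGT (by positivity)
  unfold upperLocalDim
  refine limsup_le_of_le (by isBoundedDefault) ?_
  filter_upwards [h1, h2] with ρ hρ1 hρ2
  obtain ⟨hρ0, hρ3⟩ := hρ2
  have hρlt1 : ρ < 1 := hρ3.trans_le (min_le_left _ _)
  have hρN : ρ / (6 * r) < δ ^ N := by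
    rw [div_lt_iff₀ (by positivity), mul_comm]
    exact hρ3.trans_le (min_le_right _ _)
  obtain ⟨n, hn1, hn2⟩ := exists_nat_pow_near_of_lt_one (x := ρ / (6 * r)) (y := δ) (by positivity)
    (hρN.le.trans (pow_le_one₀ hδ.le hδ1.le)) hδ hδ1
  have hnN : N ≤ n + 1 := by
    have := (pow_lt_pow_iff_right_of_lt_one₀ hδ hδ1).1 (hn1.trans hρN)
    omega
  have h3 := hN (n + 1) hnN
  have h4 : μ.real (ball x (6 * (δ ^ (n + 1) * r))) ≤ μ.real (ball x ρ) := by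
    apply real_ball_mono
    apply ball_subset_ball
    rw [lt_div_iff₀ (by positivity)] at hn1
    linarith
  have h5 : ρ ^ s₁ ≤ μ.real (ball x ρ) := by
    refine le_trans ?_ (h3.trans h4)
    calc ρ ^ s₁ = ρ ^ (s₁ - s) * ρ ^ s := by rw [← Real.rpow_add hρ0]; congr 1; ring
      _ ≤ (δ / (6 * r)) ^ s * ρ ^ s := by gcongr
      _ = (δ / (6 * r) * ρ) ^ s := by rw [Real.mul_rpow (by positivity) hρ0.le]
      _ ≤ (δ ^ (n + 1)) ^ s := by
        apply Real.rpow_le_rpow (by positivity) _ hs.le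
        calc δ / (6 * r) * ρ = δ * (ρ / (6 * r)) := by ring
          _ ≤ δ * δ ^ n := by gcongr
          _ = δ ^ (n + 1) := by ring
      _ = (δ ^ s) ^ (n + 1) := (Real.rpow_pow_comm hδ.le _ _).symm
  have h6 : s₁ * Real.log ρ ≤ Real.log (μ.real (ball x ρ)) := by
    rw [← Real.log_rpow hρ0]
    exact Real.log_le_log (by positivity) h5
  have h7 : Real.log ρ < 0 := Real.log_neg hρ0 hρlt1
  rw [EReal.coe_le_coe_iff]
  rw [div_le_iff_of_neg h7]
  exact h6

lemma ae_dim_le {d : ℕ} (μ : Measure (EuclideanSpace ℝ (Fin d)))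
    [IsLocallyFiniteMeasure μ] {δ r s s₁ t : ℝ} (hδ : 0 < δ) (hδ1 : δ ≤ 2 / 5) (hr : 0 < r)
    (hs : 0 < s) (hs1 : s < s₁) (ht1 : t < 1)
    (A : Set (EuclideanSpace ℝ (Fin d)))
    (hstep : ∀ (x : EuclideanSpace ℝ (Fin d)) (ρ : ℝ), 0 < ρ → ρ ≤ r →
        ∃ F : Finset (EuclideanSpace ℝ (Fin d)), (∀ y ∈ F, y ∈ A) ∧
          (∀ a ∈ A, dist a x < ρ → ∃ y ∈ F, dist a y < δ * ρ) ∧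
          ∑ y ∈ F, μ.real (ball y (5 * (δ * ρ))) ^ t ≤
            (δ ^ (-(s * (1 - t))) / 2) * μ.real (ball x (5 * ρ)) ^ t)
    (x : EuclideanSpace ℝ (Fin d)) :
    ∀ᵐ a ∂μ, a ∈ A → dist a x < r → upperLocalDim μ a ≤ (s₁ : EReal) := by
  classical
  set M : ℝ := μ.real (ball x (5 * r)) ^ t with hM
  have hM0 : 0 ≤ M := Real.rpow_nonneg measureReal_nonneg _
  let B : ℕ → Set (EuclideanSpace ℝ (Fin d)) := fun n =>
    {a | a ∈ A ∧ dist a x < r ∧ μ.real (ball a (6 * (δ ^ n * r))) < (δ ^ s) ^ n}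
  have hB : ∀ n, μ (B n) ≤ ENNReal.ofReal ((1 / 2) ^ n * M) := by
    intro n
    obtain ⟨F, hF1, hF2⟩ := cover_iterate hδ hδ1 hr (by positivity) μ A hstep x n
    set ρ := δ ^ n * r with hρ
    have hρ0 : 0 < ρ := by positivity
    let F' := F.filter (fun y => μ.real (ball y (5 * ρ)) ≤ (δ ^ s) ^ n)
    have hsub : B n ⊆ ⋃ y ∈ F', ball y (5 * ρ) := by
      rintro a ⟨ha, hax, haμ⟩
      obtain ⟨y, hy, hay⟩ := hF1 a ha hax
      simp only [mem_iUnion]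
      refine ⟨y, Finset.mem_filter.2 ⟨hy, ?_⟩, ?_⟩
      · refine le_trans ?_ haμ.le
        apply real_ball_mono
        apply ball_subset_ball'
        rw [dist_comm]; linarith
      · rw [mem_ball]; linarith
    refine (measure_mono hsub).trans ((measure_biUnion_finset_le _ _).trans ?_)
    have e1 : ∑ y ∈ F', μ (ball y (5 * ρ)) = ENNReal.ofReal (∑ y ∈ F', μ.real (ball y (5 * ρ))) := by
      rw [ENNReal.ofReal_sum_of_nonneg (fun _ _ => measureReal_nonneg)]
      refine Finset.sum_congr rfl fun y _ => ?_
      rw [ofReal_measureReal measure_ball_lt_top.ne]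
    rw [e1]
    apply ENNReal.ofReal_le_ofReal
    have hT : 0 ≤ ((δ ^ s) ^ n) ^ (1 - t) := by positivity
    calc ∑ y ∈ F', μ.real (ball y (5 * ρ))
        ≤ ∑ y ∈ F', ((δ ^ s) ^ n) ^ (1 - t) * μ.real (ball y (5 * ρ)) ^ t := by
          refine Finset.sum_le_sum fun y hy => ?_
          have hy2 := (Finset.mem_filter.1 hy).2
          have e2 : μ.real (ball y (5 * ρ)) =
              μ.real (ball y (5 * ρ)) ^ (1 - t) * μ.real (ball y (5 * ρ)) ^ t := by
            rw [← Real.rpow_add' measureReal_nonneg (by simp)]; simp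
          conv_lhs => rw [e2]
          refine mul_le_mul_of_nonneg_right ?_ (Real.rpow_nonneg measureReal_nonneg _)
          exact Real.rpow_le_rpow measureReal_nonneg hy2 (by linarith)
      _ ≤ ((δ ^ s) ^ n) ^ (1 - t) * ∑ y ∈ F, μ.real (ball y (5 * ρ)) ^ t := by
          rw [← Finset.mul_sum]
          refine mul_le_mul_of_nonneg_left ?_ hT
          exact Finset.sum_le_sum_of_subset_of_nonneg (Finset.filter_subset _ _)
            fun y _ _ => Real.rpow_nonneg measureReal_nonneg _
      _ ≤ ((δ ^ s) ^ n) ^ (1 - t) * ((δ ^ (-(s * (1 - t))) / 2) ^ n * M) := by gcongr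
      _ = (1 / 2) ^ n * M := by
          rw [← Real.rpow_pow_comm (by positivity), ← Real.rpow_mul hδ.le, ← mul_assoc,
            ← mul_pow, Real.rpow_neg hδ.le]
          congr 2
          have : 0 < δ ^ (s * (1 - t)) := by positivity
          field_simp
  have hsum : ∑' n, μ (B n) ≠ ∞ := by
    refine ne_top_of_le_ne_top ?_ (ENNReal.tsum_le_tsum hB)
    rw [← ENNReal.ofReal_tsum_of_nonneg (fun n => by positivity)]
    · exact ENNReal.ofReal_ne_top
    · exact (summable_geometric_two).mul_right M
  filter_upwards [ae_eventually_notMem hsum] with a ha haA hax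
  refine upperLocalDim_le μ hδ (by linarith) hr hs hs1 a ?_
  filter_upwards [ha] with n hn
  by_contra! hcon
  exact hn ⟨haA, hax, hcon⟩

/-- (Conical densities.) Let `1 ≤ k < d` and let `μ` be a nonzero
locally finite Borel measure on `ℝ^d` with lower packing dimension strictly larger than
`k`. Then for every `γ ∈ (0,1]` there is `c > 0` such that for `μ`-a.e. `x`,
`limsup_{r→0} inf_{θ ∈ S^{d−1}, V ∈ G(d,d−k)} μ(X(x,r,V,γ) \ H(x,θ,γ)) / μ(B(x,r)) > c`. -/
theorem stmt17 (d k : ℕ) (hk : 1 ≤ k) (hkd : k < d)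
    (μ : Measure (EuclideanSpace ℝ (Fin d))) [IsLocallyFiniteMeasure μ] (hμ : μ ≠ 0)
    (hdim : (k : EReal) < lowerPackingDim μ) :
    ∀ γ : ℝ, γ ∈ Set.Ioc (0 : ℝ) 1 → ∃ c : ℝ≥0∞, 0 < c ∧
      ∀ᵐ x ∂μ, c < Filter.limsup (fun r : ℝ =>
        ⨅ (θ : EuclideanSpace ℝ (Fin d)) (_ : ‖θ‖ = 1)
          (V : Submodule ℝ (EuclideanSpace ℝ (Fin d))) (_ : Module.finrank ℝ V = d - k),
          μ (coneX x r V γ \ halfSpaceH x θ γ) / μ (Metric.ball x r))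
        (nhdsWithin 0 (Set.Ioi 0)) := by

  intro γ hγ
  obtain ⟨hγ0, hγ1⟩ := hγ
  have hk0 : (0 : ℝ) < k := by exact_mod_cast hk
  obtain ⟨s₁, hs1k, hs1⟩ := EReal.lt_iff_exists_real_btwn.1 hdim
  have hks : (k : ℝ) < s₁ := by exact_mod_cast hs1k
  set s : ℝ := (k + s₁) / 2 with hs
  have hs0 : 0 < s := by linarith
  set t : ℝ := (s - k) / (2 * s) with ht
  have hsk : k < s := by linarith
  have ht0 : 0 < t := div_pos (by linarith) (by linarith)
  have hst : s * t = (s - k) / 2 := by rw [ht]; field_simp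
  have ht1 : t < 1 := by rw [ht, div_lt_one (by linarith)]; linarith
  obtain ⟨δ, c, hδ, hδ1, hc, hstep⟩ := cover_step hk hkd hγ0 hγ1
    (s := s * (1 - t)) (t := t) (by linarith) ht0
  have hdimae : ∀ᵐ x ∂μ, (s₁ : EReal) < upperLocalDim μ x := ae_lt_of_lt_essInf hs1
  refine ⟨ENNReal.ofReal (c / 2), by simpa using hc, ?_⟩
  let A : ℕ → Set (EuclideanSpace ℝ (Fin d)) := fun n =>
    {x | ∀ r : ℝ, 0 < r → r < 1 / (n + 1) → (⨅ (θ : EuclideanSpace ℝ (Fin d)) (_ : ‖θ‖ = 1)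
          (V : Submodule ℝ (EuclideanSpace ℝ (Fin d))) (_ : Module.finrank ℝ V = d - k),
          μ (coneX x r V γ \ halfSpaceH x θ γ) / μ (Metric.ball x r)) < ENNReal.ofReal c}
  have hweak : ∀ n : ℕ, WeakSet k γ c (1 / (n + 1)) μ (A n) := by
    intro n y hy r hr hrn
    have h1 := hy r hr hrn
    simp only [iInf_lt_iff] at h1
    obtain ⟨θ, hθ, V, hV, h2⟩ := h1
    refine ⟨θ, V, hθ, hV, ?_⟩
    have hfin : μ (ball y r) ≠ ∞ := measure_ball_lt_top.ne
    have hsub : coneX y r V γ \ halfSpaceH y θ γ ⊆ ball y r := fun z hz => hz.1.1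
    have h3 : μ (coneX y r V γ \ halfSpaceH y θ γ) ≤ ENNReal.ofReal c * μ (ball y r) := by
      by_cases h0 : μ (ball y r) = 0
      · rw [measure_mono_null hsub h0]; exact zero_le
      · exact (ENNReal.div_le_iff h0 hfin).1 h2.le
    have h4 := ENNReal.toReal_mono (ENNReal.mul_ne_top ENNReal.ofReal_ne_top hfin) h3
    rwa [ENNReal.toReal_mul, ENNReal.toReal_ofReal hc.le] at h4
  have hnull : ∀ n, μ (A n) = 0 := by
    intro n
    have hR : (0 : ℝ) < 1 / (n + 1) := by positivity
    set r : ℝ := 1 / (n + 1) / 8 with hr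
    have hr0 : 0 < r := by positivity
    refine measure_null_of_locally_null _ fun x _ => ?_
    refine ⟨A n ∩ ball x r, inter_mem self_mem_nhdsWithin
      (mem_nhdsWithin_of_mem_nhds (ball_mem_nhds x hr0)), ?_⟩
    have h1 := ae_dim_le μ hδ hδ1 hr0 hs0 (show s < s₁ by linarith) ht1 (A n)
      (fun y ρ hρ hρr => hstep μ (A n) (1 / (n + 1)) (hweak n) y ρ hρ (by linarith)) x
    have h2 : ∀ᵐ a ∂μ, a ∉ A n ∩ ball x r := by
      filter_upwards [h1, hdimae] with a ha1 ha2 ha3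
      exact absurd (ha1 ha3.1 ha3.2) (not_le.2 ha2)
    exact measure_eq_zero_iff_ae_notMem.2 h2
  have hall : ∀ᵐ x ∂μ, ∀ n, x ∉ A n := ae_all_iff.2 fun n => measure_eq_zero_iff_ae_notMem.1 (hnull n)
  filter_upwards [hall] with x hx
  by_contra! hcon
  have hlt : ENNReal.ofReal (c / 2) < ENNReal.ofReal c :=
    (ENNReal.ofReal_lt_ofReal_iff hc).2 (by linarith)
  have hev := eventually_lt_of_limsup_lt (hcon.trans_lt hlt)
  obtain ⟨ε, hε, hε2⟩ := mem_nhdsGT_iff_exists_Ioo_subset.1 hev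
  obtain ⟨n, hn⟩ := exists_nat_one_div_lt (show (0 : ℝ) < ε from hε)
  exact hx n fun r hr hrn => hε2 ⟨hr, hrn.trans hn⟩
end

section
/- For every d ∈ ℕ and every ε > 0 there exists α < 1/2 such that every set E ⊆ ℝ^d with por(E) ≥ α satisfies dim_H(E) ≤ d − 1 + ε. In other words, sup{dim_H(E) : E ⊆ ℝ^d, por(E) ≥ α} → d − 1 as α → 1/2. -/
open MeasureTheory Filter Metric Set

/-- `por(E,x,r)`: the supremum of `α ≥ 0` such that some ball `B(y,αr)` is contained in
`B(x,r) \ E`. -/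
noncomputable def porSet {X : Type*} [MetricSpace X] (E : Set X) (x : X) (r : ℝ) : ℝ :=
  sSup {α : ℝ | 0 ≤ α ∧ ∃ y, Metric.ball y (α * r) ⊆ Metric.ball x r \ E}

/-- `por(E,x) = liminf_{r→0} por(E,x,r)`. -/
noncomputable def porSetPt {X : Type*} [MetricSpace X] (E : Set X) (x : X) : ℝ :=
  Filter.liminf (fun r : ℝ => porSet E x r) (nhdsWithin 0 (Set.Ioi 0))

/-- `por(E) = inf_{x ∈ E} por(E,x)`. -/
noncomputable def porSetTotal {X : Type*} [MetricSpace X] (E : Set X) : ℝ :=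
  sInf ((fun x => porSetPt E x) '' E)

open scoped ENNReal NNReal Topology

section aux

lemma packing_bound {ι F : Type*} [NormedAddCommGroup F] [NormedSpace ℝ F] [FiniteDimensional ℝ F]
    (S : Finset ι) (p : ι → F) (z : F) (ρ s : ℝ) (hρ : 0 ≤ ρ) (hs : 0 < s)
    (hz : ∀ i ∈ S, dist (p i) z ≤ ρ)
    (hsep : ∀ i ∈ S, ∀ j ∈ S, i ≠ j → s ≤ dist (p i) (p j)) :
    (S.card : ℝ) ≤ (2 * ρ / s + 1) ^ Module.finrank ℝ F := by
  borelize F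
  let μ : Measure F := Measure.addHaar
  have hδ : 0 < s / 2 := by positivity
  have hR : 0 < ρ + s / 2 := by positivity
  have D : Set.Pairwise (S : Set ι) (Function.onFun Disjoint fun c => ball (p c) (s / 2)) := by
    rintro c hc d hd hcd
    apply ball_disjoint_ball
    have := hsep c hc d hd hcd
    linarith
  have hsub : (⋃ c ∈ S, ball (p c) (s / 2)) ⊆ ball z (ρ + s / 2) := by
    refine iUnion₂_subset fun x hx => ?_
    apply ball_subset_ball'
    have := hz x hx
    linarith
  have I : (S.card : ℝ≥0∞) * ENNReal.ofReal ((s / 2) ^ Module.finrank ℝ F) * μ (ball 0 1) ≤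
      ENNReal.ofReal ((ρ + s / 2) ^ Module.finrank ℝ F) * μ (ball 0 1) :=
    calc
      (S.card : ℝ≥0∞) * ENNReal.ofReal ((s / 2) ^ Module.finrank ℝ F) * μ (ball 0 1)
          = μ (⋃ c ∈ S, ball (p c) (s / 2)) := by
        rw [measure_biUnion_finset D fun c _ => measurableSet_ball]
        simp only [μ.addHaar_ball_of_pos _ hδ]
        simp only [Finset.sum_const, nsmul_eq_mul, mul_assoc]
      _ ≤ μ (ball z (ρ + s / 2)) := measure_mono hsub
      _ = _ := by simp only [μ.addHaar_ball_of_pos _ hR]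
  have J := (ENNReal.mul_le_mul_iff_left (measure_ball_pos μ _ zero_lt_one).ne'
    measure_ball_lt_top.ne).1 I
  have K := ENNReal.toReal_le_of_le_ofReal (pow_nonneg hR.le _) J
  rw [ENNReal.toReal_mul, ENNReal.toReal_natCast, ENNReal.toReal_ofReal (by positivity)] at K
  rw [← le_div_iff₀ (by positivity), ← div_pow] at K
  refine K.trans (le_of_eq ?_)
  congr 1
  field_simp

lemma graph_bound {d : ℕ} (hd : 0 < d) (e : EuclideanSpace ℝ (Fin d)) (he : ‖e‖ = 1)
    (S : Finset (EuclideanSpace ℝ (Fin d))) (z : EuclideanSpace ℝ (Fin d)) (ρ s : ℝ)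
    (hρ : 0 ≤ ρ) (hs : 0 < s) (hz : ∀ a ∈ S, dist a z ≤ ρ)
    (hsep : ∀ a ∈ S, ∀ b ∈ S, a ≠ b → s ≤ dist a b)
    (hg : ∀ a ∈ S, ∀ b ∈ S, a ≠ b → inner ℝ (a - b) e ≤ ‖a - b‖ / 4) :
    (S.card : ℝ) ≤ (4 * ρ / s + 1) ^ (d - 1) := by
  have hfr : Fact (Module.finrank ℝ (EuclideanSpace ℝ (Fin d)) = (d - 1) + 1) :=
    ⟨by rw [finrank_euclideanSpace_fin]; omega⟩
  have he0 : e ≠ 0 := by intro h; simp [h] at he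
  have hdim : Module.finrank ℝ (Submodule.span ℝ {e})ᗮ = d - 1 :=
    Submodule.finrank_orthogonal_span_singleton he0
  let P := (Submodule.span ℝ {e})ᗮ.orthogonalProjectionOnto
  have key := packing_bound S (fun a => P a) (P z) ρ (s / 2) hρ (by positivity) ?_ ?_
  · rw [hdim] at key
    convert key using 2
    field_simp
    ring
  · intro a ha
    rw [dist_eq_norm, ← map_sub]
    refine le_trans ?_ (hz a ha)
    rw [dist_eq_norm]
    exact Submodule.norm_orthogonalProjectionOnto_apply_le _ _
  · intro a ha b hb hab
    rw [dist_eq_norm, ← map_sub]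
    have h1 := hsep a ha b hb hab
    rw [dist_eq_norm] at h1
    have h2 := hg a ha b hb hab
    have h3 := hg b hb a ha hab.symm
    rw [norm_sub_rev, ← neg_sub a b, inner_neg_left] at h3
    generalize a - b = v at *
    have h4 := Submodule.norm_sq_eq_add_norm_sq_projection v (Submodule.span ℝ {e})
    have h5 : ‖(Submodule.span ℝ {e}).orthogonalProjectionOnto v‖ = |inner ℝ v e| := by
      rw [Submodule.coe_norm, ← Submodule.starProjection_apply,
        Submodule.starProjection_unit_singleton ℝ he, norm_smul, he, mul_one, real_inner_comm,
        Real.norm_eq_abs]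
    rw [h5, sq_abs] at h4
    change s / 2 ≤ ‖(Submodule.span ℝ {e})ᗮ.orthogonalProjectionOnto v‖
    have hw := norm_nonneg ((Submodule.span ℝ {e})ᗮ.orthogonalProjectionOnto v)
    generalize ‖(Submodule.span ℝ {e})ᗮ.orthogonalProjectionOnto v‖ = w at *
    have h6 : (inner ℝ v e) ^ 2 ≤ (‖v‖ / 4) ^ 2 := sq_le_sq' (by linarith) h2
    have : s / 2 ≤ ‖v‖ / 2 := by linarith
    refine this.trans ?_
    apply le_of_sq_le_sq _ hw
    nlinarith

/-- separated points from a porous set satisfy the one-sided cone condition -/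
lemma hole_cone {d : ℕ} (hd : 0 < d) (A : Set (EuclideanSpace ℝ (Fin d)))
    (x y : EuclideanSpace ℝ (Fin d)) (hx : x ∈ A) (β r : ℝ) (hr : 0 < r) (hβ : 1 / 4 ≤ β)
    (hβ' : β ≤ 1 / 2)
    (hy : ball y (β * r) ⊆ ball x r \ A) :
    ∃ e : EuclideanSpace ℝ (Fin d), ‖e‖ = 1 ∧ ∀ a ∈ A,
      inner ℝ (a - x) e ≤ 2 * ‖a - x‖ ^ 2 / r + 4 * (1 / 2 - β) * r := by
  have hβr : 0 < β * r := by positivity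
  have hout : ∀ a ∈ A, β * r ≤ dist a y := by
    intro a ha
    by_contra! h
    exact (hy (mem_ball.2 h)).2 ha
  have h1 : β * r ≤ ‖y - x‖ := by
    have := hout x hx
    rwa [dist_comm, dist_eq_norm] at this
  have hpos : 0 < ‖y - x‖ := hβr.trans_le h1
  have h2 : ‖y - x‖ ≤ (1 - β) * r := by
    have hcl : closedBall y (β * r) ⊆ closedBall x r := by
      rw [← closure_ball y hβr.ne', ← closure_ball x hr.ne']
      exact closure_mono (hy.trans sdiff_subset)
    have hm : y + (β * r / ‖y - x‖) • (y - x) ∈ closedBall x r := by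
      apply hcl
      rw [mem_closedBall, dist_eq_norm, add_sub_cancel_left, norm_smul, Real.norm_eq_abs,
        abs_of_pos (by positivity)]
      field_simp
      exact le_rfl
    rw [mem_closedBall, dist_eq_norm] at hm
    have : y + (β * r / ‖y - x‖) • (y - x) - x = (1 + β * r / ‖y - x‖) • (y - x) := by
      module
    rw [this, norm_smul, Real.norm_eq_abs, abs_of_pos (by positivity), add_mul,
      div_mul_cancel₀ _ hpos.ne'] at hm
    linarith
  refine ⟨‖y - x‖⁻¹ • (y - x), by rw [norm_smul, norm_inv, norm_norm, inv_mul_cancel₀ hpos.ne'], ?_⟩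
  intro a ha
  have h3 := hout a ha
  rw [dist_eq_norm, show a - y = (a - x) - (y - x) by abel] at h3
  have h4 := norm_sub_sq_real (a - x) (y - x)
  rw [inner_smul_right]
  generalize ‖(a - x) - (y - x)‖ = q at *
  generalize inner ℝ (a - x) (y - x) = i at *
  generalize ‖a - x‖ = v at *
  generalize ‖y - x‖ = t at *
  have h5 : (β * r) ^ 2 ≤ q ^ 2 := pow_le_pow_left₀ hβr.le h3 2
  have h6 : t ^ 2 ≤ ((1 - β) * r) ^ 2 := pow_le_pow_left₀ hpos.le h2 2
  have h7 : 2 * i ≤ v ^ 2 + (1 - 2 * β) * r ^ 2 := by nlinarith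
  have h8 : r / 4 ≤ t := by nlinarith
  have h9 : 0 ≤ v ^ 2 + (1 - 2 * β) * r ^ 2 := by
    have : 0 ≤ 1 - 2 * β := by linarith
    positivity
  rw [inv_mul_le_iff₀ hpos]
  have h10 : r / 4 * (2 * v ^ 2 / r + 4 * (1 / 2 - β) * r) ≤
      t * (2 * v ^ 2 / r + 4 * (1 / 2 - β) * r) := by
    apply mul_le_mul_of_nonneg_right h8
    have : 0 ≤ 1 / 2 - β := by linarith
    positivity
  have h11 : r / 4 * (2 * v ^ 2 / r + 4 * (1 / 2 - β) * r) =
    (v ^ 2 + (1 - 2 * β) * r ^ 2) / 2 := by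
    field_simp
    ring
  linarith

lemma sphere_net_s18 (d : ℕ) : ∃ T : Finset (EuclideanSpace ℝ (Fin d)), (∀ u ∈ T, ‖u‖ = 1) ∧
    ∀ e : EuclideanSpace ℝ (Fin d), ‖e‖ = 1 → ∃ u ∈ T, ‖u - e‖ ≤ 1 / 8 := by
  obtain ⟨t, hts, htf, hc⟩ := (isCompact_sphere (0 : EuclideanSpace ℝ (Fin d)) 1).finite_cover_balls
    (e := 1 / 8) (by norm_num)
  refine ⟨htf.toFinset, ?_, ?_⟩
  · intro u hu
    have := hts (htf.mem_toFinset.1 hu)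
    simpa using this
  · intro e he
    have := hc (show e ∈ sphere (0 : EuclideanSpace ℝ (Fin d)) 1 by simpa using he)
    simp only [mem_iUnion] at this
    obtain ⟨u, hu, hb⟩ := this
    refine ⟨u, htf.mem_toFinset.2 hu, ?_⟩
    rw [mem_ball, dist_comm, dist_eq_norm] at hb
    exact hb.le

lemma count_bound {d : ℕ} (hd : 0 < d) (T : Finset (EuclideanSpace ℝ (Fin d)))
    (hT1 : ∀ u ∈ T, ‖u‖ = 1)
    (hT : ∀ e : EuclideanSpace ℝ (Fin d), ‖e‖ = 1 → ∃ u ∈ T, ‖u - e‖ ≤ 1 / 8)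
    (k : ℕ) (hk : 0 < k) (A : Set (EuclideanSpace ℝ (Fin d))) (ρ : ℝ) (hρ : 0 < ρ)
    (hA : ∀ x ∈ A, ∃ y, ball y ((1 / 2 - 1 / (4096 * k)) * (64 * ρ)) ⊆ ball x (64 * ρ) \ A)
    (z : EuclideanSpace ℝ (Fin d)) (S : Finset (EuclideanSpace ℝ (Fin d)))
    (hSA : ∀ a ∈ S, a ∈ A) (hz : ∀ a ∈ S, dist a z ≤ ρ)
    (hsep : ∀ a ∈ S, ∀ b ∈ S, a ≠ b → ρ / k ≤ dist a b) :
    (S.card : ℝ) ≤ T.card * (5 * k) ^ (d - 1) := by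
  classical
  have hk1 : (1 : ℝ) ≤ k := by exact_mod_cast hk
  have hk0 : (0 : ℝ) < k := by linarith
  have hδ : 1 / (4096 * (k : ℝ)) ≤ 1 / 4 := by
    apply one_div_le_one_div_of_le <;> linarith
  have hδ0 : 0 < 1 / (4096 * (k : ℝ)) := by positivity
  have hdir : ∀ x, ∃ u, x ∈ S → u ∈ T ∧ ∀ a ∈ S, a ≠ x → inner ℝ (a - x) u ≤ ‖a - x‖ / 4 := by
    intro x
    by_cases hx : x ∈ S
    swap
    · exact ⟨0, fun h => absurd h hx⟩
    obtain ⟨y, hy⟩ := hA x (hSA x hx)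
    obtain ⟨e, he, hcone⟩ := hole_cone hd A x y (hSA x hx) _ _ (by positivity) (by linarith)
      (by linarith) hy
    obtain ⟨u, hu, hue⟩ := hT e he
    refine ⟨u, fun _ => ⟨hu, fun a ha hax => ?_⟩⟩
    have h1 := hcone a (hSA a ha)
    have h2 := hsep a ha x hx hax
    have h3 : ‖a - x‖ ≤ 2 * ρ := by
      have := dist_triangle_right a x z
      have h5 := hz a ha
      have h6 := hz x hx
      rw [← dist_eq_norm]; linarith
    rw [dist_eq_norm] at h2
    have h4 : inner ℝ (a - x) (u - e) ≤ ‖a - x‖ * (1 / 8) :=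
      (real_inner_le_norm _ _).trans (mul_le_mul_of_nonneg_left hue (norm_nonneg _))
    rw [inner_sub_right] at h4
    have hn := norm_nonneg (a - x)
    generalize ‖a - x‖ = v at *
    have h5 : 2 * v ^ 2 / (64 * ρ) ≤ v / 16 := by
      rw [div_le_iff₀ (by positivity)]
      nlinarith
    have h6 : 4 * (1 / 2 - (1 / 2 - 1 / (4096 * (k : ℝ)))) * (64 * ρ) = (ρ / k) / 16 := by
      field_simp
      norm_num
    linarith
  choose u hu using hdir
  have hmap : ∀ x ∈ S, u x ∈ T := fun x hx => (hu x hx).1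
  have hcard := Finset.card_eq_sum_card_fiberwise (f := u) (s := S) (t := T) hmap
  have hfib : ∀ w ∈ T, ((S.filter (fun x => u x = w)).card : ℝ) ≤ (5 * k) ^ (d - 1) := by
    intro w hw
    have := graph_bound hd w (hT1 w hw) (S.filter (fun x => u x = w)) z ρ (ρ / k) hρ.le
      (by positivity) (fun a ha => hz a (Finset.mem_filter.1 ha).1)
      (fun a ha b hb => hsep a (Finset.mem_filter.1 ha).1 b (Finset.mem_filter.1 hb).1)
      (fun a ha b hb hab => by
        have h1 := (hu b (Finset.mem_filter.1 hb).1).2 a (Finset.mem_filter.1 ha).1 hab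
        rwa [(Finset.mem_filter.1 hb).2] at h1)
    refine this.trans ?_
    apply pow_le_pow_left₀ (by positivity)
    have : 4 * ρ / (ρ / k) = 4 * k := by field_simp
    rw [this]; linarith
  rw [hcard]
  push_cast
  refine (Finset.sum_le_card_nsmul _ _ _ hfib).trans ?_
  rw [nsmul_eq_mul]

lemma exists_cover {X : Type*} [MetricSpace X] (B : Set X) (s : ℝ) (hs : 0 ≤ s) (M : ℕ)
    (hM : ∀ S : Finset X, (∀ a ∈ S, a ∈ B) → (∀ a ∈ S, ∀ b ∈ S, a ≠ b → s ≤ dist a b) →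
      S.card ≤ M) :
    ∃ S : Finset X, S.card ≤ M ∧ B ⊆ ⋃ a ∈ S, closedBall a s := by
  classical
  let Q : ℕ → Prop := fun n => ∃ S : Finset X, (∀ a ∈ S, a ∈ B) ∧
    (∀ a ∈ S, ∀ b ∈ S, a ≠ b → s ≤ dist a b) ∧ S.card = n
  have hQ0 : Q 0 := ⟨∅, by simp⟩
  obtain ⟨S, hSB, hsep, hc⟩ := Nat.findGreatest_spec (P := Q) (Nat.zero_le M) hQ0
  refine ⟨S, hM S hSB hsep, ?_⟩
  intro x hx
  by_contra hcon
  simp only [mem_iUnion, not_exists, mem_closedBall, not_le] at hcon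
  by_cases hxS : x ∈ S
  · have := hcon x hxS
    rw [dist_self] at this
    linarith
  · have hQ : Q (S.card + 1) := by
      refine ⟨insert x S, ?_, ?_, Finset.card_insert_of_notMem hxS⟩
      · intro a ha
        rcases Finset.mem_insert.1 ha with rfl | ha
        · exact hx
        · exact hSB a ha
      · intro a ha b hb hab
        rcases Finset.mem_insert.1 ha with rfl | ha' <;> rcases Finset.mem_insert.1 hb with rfl | hb'
        · exact absurd rfl hab
        · exact (hcon b hb').le
        · rw [dist_comm]; exact (hcon a ha').le
        · exact hsep a ha' b hb' hab
    obtain ⟨S', h1, h2, h3⟩ := id hQ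
    have h4 : S.card + 1 ≤ M := h3 ▸ hM S' h1 h2
    have := Nat.le_findGreatest h4 hQ
    omega

lemma iter_cover {X : Type*} [MetricSpace X] (A : Set X) (k M : ℕ) (hk : 0 < k) (ρ₀ : ℝ)
    (h0 : 0 < ρ₀)
    (h : ∀ ρ, 0 < ρ → ρ ≤ ρ₀ → ∀ z, ∃ S : Finset X, S.card ≤ M ∧
      A ∩ closedBall z ρ ⊆ ⋃ a ∈ S, closedBall a (ρ / k)) (z : X) (n : ℕ) :
    ∃ S : Finset X, S.card ≤ M ^ n ∧
      A ∩ closedBall z ρ₀ ⊆ ⋃ a ∈ S, closedBall a (ρ₀ / k ^ n) := by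
  classical
  induction n with
  | zero => exact ⟨{z}, by simp, by simp⟩
  | succ n ih =>
    obtain ⟨S, hS, hc⟩ := ih
    have hk1 : (1 : ℝ) ≤ k := by exact_mod_cast hk
    have hρ : 0 < ρ₀ / (k : ℝ) ^ n := by positivity
    have hρ' : ρ₀ / (k : ℝ) ^ n ≤ ρ₀ := div_le_self h0.le (one_le_pow₀ hk1)
    choose F hF1 hF2 using h _ hρ hρ'
    refine ⟨S.biUnion F, ?_, ?_⟩
    · refine (Finset.card_biUnion_le_card_mul _ _ M (fun a _ => hF1 a)).trans ?_
      rw [pow_succ]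
      exact Nat.mul_le_mul_right _ hS
    · intro x hx
      have h1 := hc hx
      simp only [mem_iUnion] at h1
      obtain ⟨a, ha, hxa⟩ := h1
      have h2 := hF2 a ⟨hx.1, hxa⟩
      simp only [mem_iUnion] at h2 ⊢
      obtain ⟨b, hb, hxb⟩ := h2
      refine ⟨b, Finset.mem_biUnion.2 ⟨a, ha, hb⟩, ?_⟩
      rwa [div_div, ← pow_succ] at hxb

lemma dimH_le_of_cover {X : Type*} [MetricSpace X] (B : Set X) (k M : ℕ) (hk : 1 < k)
    (ρ₀ : ℝ) (h0 : 0 < ρ₀) (t : ℝ≥0) (hMt : (M : ℝ) ≤ (k : ℝ) ^ (t : ℝ))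
    (h : ∀ n : ℕ, ∃ S : Finset X, S.card ≤ M ^ n ∧
      B ⊆ ⋃ a ∈ S, closedBall a (ρ₀ / k ^ n)) : dimH B ≤ t := by
  borelize X
  choose S hS hc using h
  have hk1 : (1 : ℝ) < k := by exact_mod_cast hk
  have hk0 : (0 : ℝ) < k := by linarith
  apply dimH_le_of_hausdorffMeasure_ne_top
  have hdiam : ∀ (n : ℕ) (a : X), ediam (closedBall a (ρ₀ / (k : ℝ) ^ n)) ≤
      ENNReal.ofReal (2 * (ρ₀ / (k : ℝ) ^ n)) := by
    intro n a
    apply ediam_le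
    intro x hx y hy
    rw [edist_dist]
    apply ENNReal.ofReal_le_ofReal
    have := dist_triangle_right x y a
    rw [mem_closedBall] at hx hy
    linarith
  have hlim : Tendsto (fun n : ℕ => ENNReal.ofReal (2 * (ρ₀ / (k : ℝ) ^ n))) atTop (𝓝 0) := by
    rw [← ENNReal.ofReal_zero]
    apply ENNReal.tendsto_ofReal
    have := (tendsto_pow_atTop_nhds_zero_of_lt_one (r := (k : ℝ)⁻¹) (by positivity)
      (inv_lt_one_of_one_lt₀ hk1)).const_mul (2 * ρ₀)
    rw [mul_zero] at this
    refine this.congr fun n => ?_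
    rw [inv_pow]; ring
  have key := Measure.hausdorffMeasure_le_liminf_sum (ι := fun n => {a // a ∈ S n}) (t : ℝ) B
    (l := atTop) _ hlim (fun n a => closedBall a.1 (ρ₀ / (k : ℝ) ^ n))
    (Eventually.of_forall fun n a => hdiam n a.1)
    (Eventually.of_forall fun n => by
      intro x hx
      have := hc n hx
      simp only [mem_iUnion] at this ⊢
      obtain ⟨a, ha, hxa⟩ := this
      exact ⟨⟨a, ha⟩, hxa⟩)
  have hb : ∀ n, ∑ a : {a // a ∈ S n}, ediam (closedBall a.1 (ρ₀ / (k : ℝ) ^ n)) ^ (t : ℝ) ≤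
      ENNReal.ofReal ((2 * ρ₀) ^ (t : ℝ)) := by
    intro n
    have : ∀ a ∈ (Finset.univ : Finset {a // a ∈ S n}),
        ediam (closedBall a.1 (ρ₀ / (k : ℝ) ^ n)) ^ (t : ℝ) ≤
        ENNReal.ofReal ((2 * (ρ₀ / (k : ℝ) ^ n)) ^ (t : ℝ)) := by
      intro a _
      rw [← ENNReal.ofReal_rpow_of_nonneg (by positivity) t.coe_nonneg]
      exact ENNReal.rpow_le_rpow (hdiam n a.1) t.coe_nonneg
    refine (Finset.sum_le_card_nsmul _ _ _ this).trans ?_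
    rw [nsmul_eq_mul, ← ENNReal.ofReal_natCast, ← ENNReal.ofReal_mul (by positivity)]
    apply ENNReal.ofReal_le_ofReal
    have h1 : ((Finset.univ : Finset {a // a ∈ S n}).card : ℝ) ≤ ((k : ℝ) ^ (t : ℝ)) ^ n := by
      rw [Finset.card_univ, Fintype.card_coe]
      refine le_trans (b := (M : ℝ) ^ n) (by exact_mod_cast hS n) ?_
      exact pow_le_pow_left₀ (by positivity) hMt n
    have h2 : (2 * (ρ₀ / (k : ℝ) ^ n)) ^ (t : ℝ) = (2 * ρ₀) ^ (t : ℝ) / ((k : ℝ) ^ (t : ℝ)) ^ n := by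
      rw [← mul_div_assoc, Real.div_rpow (by positivity) (by positivity), ← Real.rpow_natCast,
        ← Real.rpow_natCast, ← Real.rpow_mul hk0.le, ← Real.rpow_mul hk0.le, mul_comm (n : ℝ)]
    rw [h2]
    have h3 : 0 < ((k : ℝ) ^ (t : ℝ)) ^ n := by positivity
    calc _ ≤ ((k : ℝ) ^ (t : ℝ)) ^ n * ((2 * ρ₀) ^ (t : ℝ) / ((k : ℝ) ^ (t : ℝ)) ^ n) := by
          apply mul_le_mul_of_nonneg_right h1; positivity
      _ = _ := by field_simp
  refine ne_top_of_le_ne_top (b := ENNReal.ofReal ((2 * ρ₀) ^ (t : ℝ))) ENNReal.ofReal_ne_top ?_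
  refine key.trans ?_
  refine (liminf_le_liminf (Eventually.of_forall hb)).trans ?_
  simp

lemma por_eventually {X : Type*} [MetricSpace X] (E : Set X) (α β : ℝ) (hα : α ≤ porSetTotal E)
    (hβ : β < α) (x : X) (hx : x ∈ E) :
    ∀ᶠ r in 𝓝[>] (0 : ℝ), ∃ y, ball y (β * r) ⊆ ball x r \ E := by
  have hnn : ∀ x r, 0 ≤ porSet E x r := fun x r => Real.sSup_nonneg fun a ha => ha.1
  have hpt : ∀ x, 0 ≤ porSetPt E x := by
    intro x
    unfold porSetPt
    rw [liminf_eq]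
    refine Real.sSup_nonneg' ⟨0, ?_, le_rfl⟩
    rw [mem_setOf_eq]
    exact Eventually.of_forall (fun r => hnn x r)
  have h1 : porSetTotal E ≤ porSetPt E x :=
    csInf_le ⟨0, by rintro _ ⟨x, _, rfl⟩; exact hpt x⟩ ⟨x, hx, rfl⟩
  have h2 : β < liminf (fun r : ℝ => porSet E x r) (𝓝[>] 0) := hβ.trans_le (hα.trans h1)
  have h3 := eventually_lt_of_lt_liminf h2
    (isBoundedUnder_of ⟨0, fun r => hnn x r⟩)
  filter_upwards [h3, self_mem_nhdsWithin] with r hr hr0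
  have hne : {α : ℝ | 0 ≤ α ∧ ∃ y, Metric.ball y (α * r) ⊆ Metric.ball x r \ E}.Nonempty :=
    ⟨0, le_rfl, x, by simp⟩
  obtain ⟨a, ⟨_, y, hy⟩, ha⟩ := exists_lt_of_lt_csSup hne hr
  exact ⟨y, (ball_subset_ball (mul_le_mul_of_nonneg_right ha.le (le_of_lt hr0))).trans hy⟩

end aux

/-- (Mattila.) For every `d` and every `ε > 0` there is `α < 1/2` such
that every set `E ⊆ ℝ^d` with `por(E) ≥ α` has Hausdorff dimension at most `d − 1 + ε`;
i.e. `sup{dim_H E : por(E) ≥ α} → d − 1` as `α → 1/2`. -/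
theorem stmt18 (d : ℕ) (hd : 0 < d) (ε : ℝ) (hε : 0 < ε) :
    ∃ α : ℝ, α < 1 / 2 ∧
      ∀ E : Set (EuclideanSpace ℝ (Fin d)), α ≤ porSetTotal E →
        (dimH E : EReal) ≤ (((d : ℝ) - 1 + ε : ℝ) : EReal) := by
  obtain ⟨T, hT1, hT⟩ := sphere_net_s18 d
  obtain ⟨k, hk1, hk⟩ : ∃ k : ℕ, 1 < k ∧ (T.card : ℝ) * 5 ^ (d - 1) ≤ (k : ℝ) ^ ε := by
    have h := ((tendsto_rpow_atTop hε).comp tendsto_natCast_atTop_atTop).eventually_ge_atTop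
      ((T.card : ℝ) * 5 ^ (d - 1))
    obtain ⟨k, h1, h2⟩ := ((eventually_gt_atTop 1).and h).exists
    exact ⟨k, h1, h2⟩
  have hk0 : (0 : ℝ) < k := by exact_mod_cast (by omega : 0 < k)
  have hd1 : (1 : ℝ) ≤ d := by exact_mod_cast hd
  refine ⟨1 / 2 - 1 / (8192 * k), by have : 0 < 1 / (8192 * (k : ℝ)) := by positivity
                                     linarith, ?_⟩
  intro E hE
  have hβ : (1 / 2 - 1 / (4096 * k) : ℝ) < 1 / 2 - 1 / (8192 * k) := by
    have : 1 / (8192 * (k : ℝ)) < 1 / (4096 * k) := by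
      apply one_div_lt_one_div_of_lt <;> linarith
    linarith
  have hpor := por_eventually E _ _ hE hβ
  set β : ℝ := 1 / 2 - 1 / (4096 * k) with hβdef
  let ρ : ℕ → ℝ := fun n => 1 / (n + 1) / 128
  have hρ : ∀ n, 0 < ρ n := fun n => by positivity
  let A : ℕ → Set (EuclideanSpace ℝ (Fin d)) := fun n =>
    {x | x ∈ E ∧ ∀ r, 0 < r → r < 1 / ((n : ℝ) + 1) → ∃ y, ball y (β * r) ⊆ ball x r \ E}
  let c := TopologicalSpace.denseSeq (EuclideanSpace ℝ (Fin d))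
  have hcover : E ⊆ ⋃ n, ⋃ q, A n ∩ closedBall (c q) (ρ n) := by
    intro x hx
    have h1 := hpor x hx
    rw [eventually_nhdsWithin_iff, Metric.eventually_nhds_iff] at h1
    obtain ⟨η, hη, h2⟩ := h1
    obtain ⟨n, hn⟩ := exists_nat_one_div_lt hη
    obtain ⟨q, hq⟩ := (TopologicalSpace.denseRange_denseSeq
      (EuclideanSpace ℝ (Fin d))).exists_dist_lt x (hρ n)
    simp only [mem_iUnion]
    refine ⟨n, q, ⟨hx, fun r hr hrn => h2 ?_ hr⟩, hq.le⟩
    rw [Real.dist_eq, sub_zero, abs_of_pos hr]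
    linarith
  let t : ℝ≥0 := ⟨(d : ℝ) - 1 + ε, by linarith⟩
  let M : ℕ := T.card * (5 * k) ^ (d - 1)
  have hM : (M : ℝ) ≤ (k : ℝ) ^ (t : ℝ) := by
    change ((T.card * (5 * k) ^ (d - 1) : ℕ) : ℝ) ≤ (k : ℝ) ^ ((d : ℝ) - 1 + ε)
    rw [Real.rpow_add hk0, show (d : ℝ) - 1 = ((d - 1 : ℕ) : ℝ) by
      rw [Nat.cast_sub hd, Nat.cast_one], Real.rpow_natCast]
    push_cast
    rw [mul_pow]
    have : (0 : ℝ) ≤ (k : ℝ) ^ (d - 1) := by positivity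
    nlinarith
  have hdim : dimH E ≤ t := by
    refine (dimH_mono hcover).trans ?_
    rw [dimH_iUnion]
    refine iSup_le fun n => ?_
    rw [dimH_iUnion]
    refine iSup_le fun q => ?_
    refine dimH_le_of_cover _ k M hk1 (ρ n) (hρ n) t hM ?_
    refine iter_cover (A n) k M (by omega) (ρ n) (hρ n) ?_ (c q)
    intro r hr hrn z
    refine exists_cover _ _ (by positivity) M ?_
    intro S hS hsep
    have hlt : 64 * r < 1 / ((n : ℝ) + 1) := by
      have : r ≤ 1 / ((n : ℝ) + 1) / 128 := hrn
      have h1 : 0 < 1 / ((n : ℝ) + 1) := by positivity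
      linarith
    have := count_bound hd T hT1 hT k (by omega) (A n) r hr ?_ z S (fun a ha => (hS a ha).1)
      (fun a ha => (hS a ha).2) hsep
    · exact_mod_cast this
    · intro x hx
      obtain ⟨y, hy⟩ := hx.2 (64 * r) (by positivity) hlt
      exact ⟨y, hy.trans (sdiff_subset_sdiff_right fun a ha => ha.1)⟩
  have h2 : (dimH E : EReal) ≤ ((t : ℝ≥0∞) : EReal) := by exact_mod_cast hdim
  refine h2.trans (le_of_eq ?_)
  rfl
end

section
/- For every d ∈ ℕ there is a constant C_d > 0 such that: if α ∈ (0,1/2], ρ ∈ (0,1], and E ⊆ ℝ^d is a mean (α,ρ)-porous set, then the Hausdorff dimension of E satisfies dim_H(E) ≤ d − C_d·ρ·α^d. -/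
open MeasureTheory Filter Metric Set
open scoped Classical

/-- `E` is mean `(α,ρ)`-porous: at every point of `E` the lower asymptotic proportion of
scales `i` with `por(E,x,2^{-i}) ≥ α` is at least `ρ`. -/
def IsMeanPorousSet {X : Type*} [MetricSpace X] (E : Set X) (α ρ : ℝ) : Prop :=
  ∀ x ∈ E,
    ρ ≤ Filter.liminf (fun n : ℕ =>
      (((Finset.range n).filter fun i => α ≤ porSet E x ((2 : ℝ) ^ (-(i : ℤ)))).card : ℝ) / n)
      Filter.atTop

def Hole {X I : Type*} (A : Set X) (c : ℕ → X → I) (ch : I → Finset I) : ℕ → ℕ → I → Prop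
  | 0, g, k => ∀ x ∈ A, c g x ≠ k
  | j + 1, g, k => ∃ k' ∈ ch k, Hole A c ch j (g + 1) k'

noncomputable def cnt {X I : Type*} (A : Set X) (c : ℕ → X → I) (ch : I → Finset I)
    (m n g : ℕ) (x : X) : ℕ :=
  ((Finset.Ico g n).filter (fun i => Hole A c ch m i (c i x))).card

lemma cnt_succ_le {X I : Type*} (A : Set X) (c : ℕ → X → I) (ch : I → Finset I)
    (m n g : ℕ) (x : X) : cnt A c ch m n g x ≤ cnt A c ch m n (g + 1) x + 1 := by
  unfold cnt
  have : (Finset.Ico g n).filter (fun i => Hole A c ch m i (c i x)) ⊆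
      insert g ((Finset.Ico (g + 1) n).filter (fun i => Hole A c ch m i (c i x))) := by
    intro i hi
    simp only [Finset.mem_filter, Finset.mem_Ico, Finset.mem_insert] at hi ⊢
    by_cases h : i = g
    · exact Or.inl h
    · exact Or.inr ⟨⟨by omega, hi.1.2⟩, hi.2⟩
  exact (Finset.card_le_card this).trans (Finset.card_insert_le _ _)

lemma cnt_succ_le' {X I : Type*} (A : Set X) (c : ℕ → X → I) (ch : I → Finset I)
    (m n g : ℕ) (x : X) (hw : ¬ (g < n ∧ Hole A c ch m g (c g x))) :
    cnt A c ch m n g x ≤ cnt A c ch m n (g + 1) x := by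
  unfold cnt
  apply Finset.card_le_card
  intro i hi
  simp only [Finset.mem_filter, Finset.mem_Ico] at hi ⊢
  by_cases h : i = g
  · subst h; exact absurd ⟨hi.1.2, hi.2⟩ hw
  · exact ⟨⟨by omega, hi.1.2⟩, hi.2⟩

/-- cover statement -/
def Cov {X I : Type*} (A : Set X) (c : ℕ → X → I) (ch : I → Finset I)
    (m n : ℕ) (ω : ℝ) (g : ℕ) (k : I) (q : ℕ) (b : ℝ) : Prop :=
  ∃ T : Finset I, (T.card : ℝ) * ω ^ q ≤ b ∧
    ∀ x ∈ A, c g x = k → q ≤ cnt A c ch m n g x → c (n + m) x ∈ T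

lemma cov_step {X I : Type*} {A : Set X} {c : ℕ → X → I} {ch : I → Finset I}
    {m n : ℕ} {ω : ℝ} (hω : 1 ≤ ω) (hc : ∀ g x, c (g + 1) x ∈ ch (c g x)) {g : ℕ} {k : I} {q q' : ℕ}
    {b : I → ℝ} {B w : ℝ}
    (hq : ∀ x, c g x = k → q ≤ cnt A c ch m n g x → q' ≤ cnt A c ch m n (g + 1) x)
    (hw : ω ^ q ≤ w * ω ^ q') (hw0 : 0 ≤ w)
    (h : ∀ k' ∈ ch k, Cov A c ch m n ω (g + 1) k' q' (b k'))
    (hB : w * ∑ k' ∈ ch k, b k' ≤ B) : Cov A c ch m n ω g k q B := by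
  choose! T hT1 hT2 using h
  refine ⟨(ch k).biUnion T, ?_, ?_⟩
  · have h1 : (((ch k).biUnion T).card : ℝ) ≤ ∑ k' ∈ ch k, ((T k').card : ℝ) := by
      exact_mod_cast Finset.card_biUnion_le
    calc _ ≤ (∑ k' ∈ ch k, ((T k').card : ℝ)) * (w * ω ^ q') := by
          gcongr
      _ = w * ∑ k' ∈ ch k, ((T k').card : ℝ) * ω ^ q' := by
          rw [Finset.sum_mul, Finset.mul_sum]; exact Finset.sum_congr rfl fun _ _ => by ring
      _ ≤ w * ∑ k' ∈ ch k, b k' := by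
          gcongr with k' hk'
          exact hT1 k' hk'
      _ ≤ B := hB
  · intro x hx hxk hqx
    have hm : c (g + 1) x ∈ ch k := hxk ▸ hc g x
    exact Finset.mem_biUnion.2 ⟨_, hm, hT2 _ hm x hx rfl (hq x hxk hqx)⟩

lemma core {X I : Type*} {A : Set X} {c : ℕ → X → I} {ch : I → Finset I}
    {m n D : ℕ} {ω η : ℝ} (hD : 2 ≤ D) (hch : ∀ k, (ch k).card = D)
    (hω : 1 ≤ ω) (hη0 : 0 ≤ η) (hωη : ω ≤ 1 + η) (hη : 2 * η ≤ ((D : ℝ)⁻¹) ^ m)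
    (hc : ∀ g x, c (g + 1) x ∈ ch (c g x)) :
    ∀ r g, g + r = n + m → ∀ k q, Cov A c ch m n ω g k q ((D : ℝ) ^ r) ∧
      ∀ j ≤ r, j ≤ m → Hole A c ch j g k →
        Cov A c ch m n ω g k q ((D : ℝ) ^ r * (1 - (((D : ℝ)⁻¹) ^ j - 2 * η))) := by
  have hD' : (2 : ℝ) ≤ D := by exact_mod_cast hD
  have hhole0 : ∀ r g k q, Hole A c ch 0 g k →
      Cov A c ch m n ω g k q ((D : ℝ) ^ r * (1 - (((D : ℝ)⁻¹) ^ 0 - 2 * η))) := by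
    intro r g k q h
    refine ⟨∅, ?_, fun x hx hk => absurd hk (h x hx)⟩
    simp only [Finset.card_empty, pow_zero]
    have : 0 ≤ (D : ℝ) ^ r * (1 - (1 - 2 * η)) := by
      apply mul_nonneg (by positivity); linarith
    simpa using this
  intro r
  induction r with
  | zero =>
    intro g hg k q
    refine ⟨?_, ?_⟩
    · rcases Nat.eq_zero_or_pos q with rfl | hq
      · refine ⟨{k}, by simp, fun x hx hk _ => ?_⟩
        simp only [Finset.mem_singleton]
        rw [← hk]; congr 1; omega
      · refine ⟨∅, by simp, fun x hx hk h => ?_⟩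
        have : cnt A c ch m n g x = 0 := by
          unfold cnt
          rw [Finset.Ico_eq_empty (by omega)]; simp
        omega
    · intro j hj _ h
      obtain rfl : j = 0 := by omega
      exact hhole0 0 g k q h
  | succ r ih =>
    intro g hg k q
    have hb : ∀ j ≤ r + 1, j ≤ m → Hole A c ch j g k →
        Cov A c ch m n ω g k q ((D : ℝ) ^ (r + 1) * (1 - (((D : ℝ)⁻¹) ^ j - 2 * η))) := by
      intro j hj hjm h
      rcases j with _ | j
      · exact hhole0 _ g k q h
      obtain ⟨k'', hk'', hh⟩ := h
      set x : ℝ := ((D : ℝ)⁻¹) ^ j - 2 * η with hx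
      have hx0 : 0 ≤ x := by
        have : ((D : ℝ)⁻¹) ^ m ≤ ((D : ℝ)⁻¹) ^ j :=
          pow_le_pow_of_le_one (by positivity) (inv_le_one_of_one_le₀ (by linarith)) (by omega)
        linarith
      have hx1 : x ≤ 1 := by
        have : ((D : ℝ)⁻¹) ^ j ≤ 1 :=
          pow_le_one₀ (by positivity) (inv_le_one_of_one_le₀ (by linarith))
        linarith
      refine cov_step (q' := q - 1) (w := ω)
        (b := fun k' => (D : ℝ) ^ r * (1 - if k' = k'' then x else 0)) hω hc ?_ ?_
        (by linarith) ?_ ?_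
      · intro y _ hy
        have := cnt_succ_le A c ch m n g y
        omega
      · rw [← pow_succ']
        exact pow_le_pow_right₀ hω (by omega)
      · intro k' hk'
        by_cases e : k' = k''
        · subst e
          simp only [if_true]
          exact (ih (g + 1) (by omega) k' (q - 1)).2 j (by omega) (by omega) hh
        · simp only [e, if_false, sub_zero, mul_one]
          exact (ih (g + 1) (by omega) k' (q - 1)).1
      · rw [← Finset.mul_sum, Finset.sum_sub_distrib, Finset.sum_ite_eq' , if_pos hk'']
        simp only [Finset.sum_const, hch, nsmul_eq_mul, mul_one]
        have key : ω * (D - x) ≤ D * (1 - (((D : ℝ)⁻¹) ^ (j + 1) - 2 * η)) := by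
          have e1 : (D : ℝ) * ((D : ℝ)⁻¹) ^ (j + 1) = x + 2 * η := by
            rw [pow_succ', ← mul_assoc, mul_inv_cancel₀ (by positivity)]; simp [hx]
          have e2 : ω * (D - x) ≤ (1 + η) * (D - x) := by
            apply mul_le_mul_of_nonneg_right hωη; linarith
          have e3 : (D : ℝ) * (1 - (((D : ℝ)⁻¹) ^ (j + 1) - 2 * η)) =
            D - (x + 2 * η) + 2 * η * D := by rw [← e1]; ring
          rw [e3]
          nlinarith [mul_nonneg hη0 hx0, mul_nonneg hη0 (sub_nonneg.2 hD')]
        calc ω * ((D : ℝ) ^ r * (D - x)) = (D : ℝ) ^ r * (ω * (D - x)) := by ring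
          _ ≤ (D : ℝ) ^ r * (D * (1 - (((D : ℝ)⁻¹) ^ (j + 1) - 2 * η))) := by gcongr
          _ = _ := by ring
    refine ⟨?_, hb⟩
    by_cases hw : g < n ∧ Hole A c ch m g k
    · obtain ⟨T, h1, h2⟩ := hb m (by omega) le_rfl hw.2
      refine ⟨T, h1.trans ?_, h2⟩
      apply mul_le_of_le_one_right (by positivity); linarith
    · refine cov_step (q' := q) (w := 1) (b := fun _ => (D : ℝ) ^ r) hω hc ?_ (by simp)
        zero_le_one (fun k' _ => (ih (g + 1) (by omega) k' q).1) ?_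
      · intro y hy h
        exact h.trans (cnt_succ_le' A c ch m n g y (by rw [hy]; exact hw))
      · simp only [Finset.sum_const, hch, nsmul_eq_mul, pow_succ]
        linarith

/-! geometry -/

noncomputable def sh (b : Bool) : ℝ := if b then 1 / 3 else 0

lemma floor_shift (g : ℕ) (u : ℝ) : ∃ b : Bool, ∀ v : ℝ, |v - u| < ((2 : ℝ) ^ g)⁻¹ / 8 →
    ⌊(2 : ℝ) ^ g * (v + sh b)⌋ = ⌊(2 : ℝ) ^ g * (u + sh b)⌋ := by
  have h2 : (0 : ℝ) < 2 ^ g := by positivity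
  have hVU : ∀ v : ℝ, |v - u| < ((2 : ℝ) ^ g)⁻¹ / 8 → |(2 : ℝ) ^ g * v - 2 ^ g * u| < 1 / 8 := by
    intro v hv
    rw [← mul_sub, abs_mul, abs_of_pos h2]
    calc _ < (2 : ℝ) ^ g * (((2 : ℝ) ^ g)⁻¹ / 8) := by gcongr
      _ = 1 / 8 := by field_simp
  have key : ∀ s : ℝ, ∀ z : ℤ, z + 1 / 8 ≤ 2 ^ g * (u + s) → 2 ^ g * (u + s) ≤ z + 7 / 8 →
      ∀ v : ℝ, |v - u| < ((2 : ℝ) ^ g)⁻¹ / 8 →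
      ⌊(2 : ℝ) ^ g * (v + s)⌋ = ⌊(2 : ℝ) ^ g * (u + s)⌋ := by
    intro s z h1 h3 v hv
    have := abs_lt.1 (hVU v hv)
    have e1 : ⌊(2 : ℝ) ^ g * (v + s)⌋ = z := by
      rw [Int.floor_eq_iff]; constructor <;> nlinarith
    have e2 : ⌊(2 : ℝ) ^ g * (u + s)⌋ = z := by
      rw [Int.floor_eq_iff]; constructor <;> nlinarith
    rw [e1, e2]
  set z := ⌊(2 : ℝ) ^ g * u⌋ with hz
  have hz1 : (z : ℝ) ≤ 2 ^ g * u := Int.floor_le _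
  have hz2 : 2 ^ g * u < (z : ℝ) + 1 := Int.lt_floor_add_one _
  by_cases hmid : z + 1 / 8 ≤ 2 ^ g * u ∧ 2 ^ g * u ≤ z + 7 / 8
  · refine ⟨false, key _ z ?_ ?_⟩ <;> simp only [sh, Bool.false_eq_true, if_false, add_zero]
    exacts [hmid.1, hmid.2]
  · have h3 : ∃ a : ℤ, (2 : ℝ) ^ g = 3 * a + 1 ∨ (2 : ℝ) ^ g = 3 * a + 2 := by
      have : (2 ^ g) % 3 = 1 ∨ (2 ^ g) % 3 = 2 := by
        have : ¬ 3 ∣ 2 ^ g := fun h => by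
          have := Nat.Prime.dvd_of_dvd_pow Nat.prime_three h
          omega
        omega
      refine ⟨((2 ^ g / 3 : ℕ) : ℤ), ?_⟩
      have hdm := Nat.div_add_mod (2 ^ g) 3
      rcases this with h | h
      · left; rw [h] at hdm; exact_mod_cast hdm.symm
      · right; rw [h] at hdm; exact_mod_cast hdm.symm
    obtain ⟨a, ha⟩ := h3
    have hcase : 2 ^ g * u < z + 1 / 8 ∨ z + 7 / 8 < 2 ^ g * u := by
      by_contra hcon
      push Not at hcon
      exact hmid hcon
    have he : (2 : ℝ) ^ g * (u + sh true) = 2 ^ g * u + 2 ^ g / 3 := by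
      simp only [sh, if_true]; ring
    rcases hcase with h | h
    · refine ⟨true, key _ (z + a) ?_ ?_⟩ <;> rw [he] <;> push_cast <;>
        rcases ha with ha | ha <;> linarith
    · refine ⟨true, key _ (z + 1 + a) ?_ ?_⟩ <;> rw [he] <;> push_cast <;>
        rcases ha with ha | ha <;> linarith

noncomputable def cell {d : ℕ} (t : Fin d → Bool) (g : ℕ) (x : EuclideanSpace ℝ (Fin d)) :
    Fin d → ℤ := fun j => ⌊(2 : ℝ) ^ g * (x j + sh (t j))⌋

def kids {d : ℕ} (k : Fin d → ℤ) : Finset (Fin d → ℤ) :=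
  Fintype.piFinset fun j => {2 * k j, 2 * k j + 1}

lemma kids_card {d : ℕ} (k : Fin d → ℤ) : (kids k).card = 2 ^ d := by
  simp [kids, Fintype.card_piFinset]

lemma cell_kids {d : ℕ} (t : Fin d → Bool) (g : ℕ) (x : EuclideanSpace ℝ (Fin d)) :
    cell t (g + 1) x ∈ kids (cell t g x) := by
  simp only [kids, Fintype.mem_piFinset, cell, Finset.mem_insert, Finset.mem_singleton]
  intro j
  have e : (2 : ℝ) ^ (g + 1) * (x j + sh (t j)) = 2 * (2 ^ g * (x j + sh (t j))) := by ring
  rw [e]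
  set y := (2 : ℝ) ^ g * (x j + sh (t j))
  have h1 := Int.floor_le y
  have h2 := Int.lt_floor_add_one y
  have h3 : 2 * ⌊y⌋ ≤ ⌊2 * y⌋ := Int.le_floor.2 (by push_cast; linarith)
  have h4 : ⌊2 * y⌋ < 2 * ⌊y⌋ + 2 := Int.floor_lt.2 (by push_cast; linarith)
  omega

lemma dist_of_cell {d : ℕ} (hd : 0 < d) {t : Fin d → Bool} {g : ℕ}
    {x y : EuclideanSpace ℝ (Fin d)} (h : cell t g x = cell t g y) :
    dist x y < d * ((2 : ℝ) ^ g)⁻¹ := by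
  have hj : ∀ j, |x j - y j| < ((2 : ℝ) ^ g)⁻¹ := by
    intro j
    have h0 : (0 : ℝ) < 2 ^ g := by positivity
    have := Int.abs_sub_lt_one_of_floor_eq_floor (congrFun h j)
    rw [← mul_sub, abs_mul, abs_of_pos h0, add_sub_add_right_eq_sub] at this
    rw [← one_div, lt_div_iff₀ h0]; linarith
  have h1 : dist x y ≤ ∑ j, |x j - y j| := by
    rw [EuclideanSpace.dist_eq]
    apply Real.sqrt_le_iff.2
    refine ⟨by positivity, ?_⟩
    simp only [Real.dist_eq]
    exact Finset.sum_sq_le_sq_sum_of_nonneg fun j _ => abs_nonneg _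
  refine h1.trans_lt ?_
  have : Nonempty (Fin d) := ⟨⟨0, hd⟩⟩
  calc _ < ∑ j : Fin d, ((2 : ℝ) ^ g)⁻¹ :=
        Finset.sum_lt_sum_of_nonempty Finset.univ_nonempty fun j _ => hj j
    _ = _ := by simp

lemma hole_of {d : ℕ} {A : Set (EuclideanSpace ℝ (Fin d))} (t : Fin d → Bool)
    (y : EuclideanSpace ℝ (Fin d)) : ∀ m g, (∀ x ∈ A, cell t (g + m) x ≠ cell t (g + m) y) →
    Hole A (cell t) kids m g (cell t g y) := by
  intro m
  induction m with
  | zero => intro g h; exact h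
  | succ m ih =>
    intro g h
    refine ⟨_, cell_kids t g y, ih (g + 1) ?_⟩
    rw [show g + 1 + m = g + (m + 1) by omega]; exact h

lemma por_hole {d : ℕ} (hd : 0 < d) {E : Set (EuclideanSpace ℝ (Fin d))}
    {x : EuclideanSpace ℝ (Fin d)} {α : ℝ} (hα : 0 < α) {m g : ℕ}
    (hm : ((2 : ℝ) ^ m)⁻¹ ≤ α / (16 * d))
    (h : α ≤ porSet E x ((2 : ℝ) ^ (-((g + 3 : ℕ) : ℤ)))) :
    ∃ t, Hole E (cell t) kids m g (cell t g x) := by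
  have h2 : (0 : ℝ) < 2 ^ g := by positivity
  have hr : (2 : ℝ) ^ (-((g + 3 : ℕ) : ℤ)) = ((2 : ℝ) ^ g)⁻¹ / 8 := by
    rw [zpow_neg, zpow_natCast, pow_add]; field_simp; norm_num
  rw [hr] at h
  set r := ((2 : ℝ) ^ g)⁻¹ / 8 with hrdef
  have hr0 : 0 < r := by positivity
  have hne : {α : ℝ | 0 ≤ α ∧ ∃ y, Metric.ball y (α * r) ⊆ Metric.ball x r \ E}.Nonempty :=
    ⟨0, le_rfl, x, by simp⟩
  obtain ⟨a, ⟨ha0, y, hy⟩, ha⟩ := exists_lt_of_lt_csSup hne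
    (show α / 2 < _ from lt_of_lt_of_le (by linarith) h)
  have hyx : dist y x < r := by
    have := (hy (Metric.mem_ball_self (by nlinarith))).1
    exact this
  choose t ht using fun j => floor_shift g (x j)
  refine ⟨t, ?_⟩
  have hc : cell t g x = cell t g y := by
    funext j
    refine (ht j (y j) ?_).symm
    refine lt_of_le_of_lt ?_ hyx
    rw [← Real.dist_eq]
    have := EuclideanSpace.dist_eq y x
    rw [this]
    apply Real.le_sqrt_of_sq_le
    exact Finset.single_le_sum (f := fun j => dist (y j) (x j) ^ 2) (fun _ _ => by positivity)
      (Finset.mem_univ j)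
  rw [hc]
  apply hole_of
  intro z hz hzy
  have hd' : (0 : ℝ) < d := by exact_mod_cast hd
  have h1 := dist_of_cell hd hzy
  have h3 : (d : ℝ) * ((2 : ℝ) ^ (g + m))⁻¹ ≤ a * r := by
    calc (d : ℝ) * ((2 : ℝ) ^ (g + m))⁻¹ = d * ((2 : ℝ) ^ g)⁻¹ * ((2 : ℝ) ^ m)⁻¹ := by
          rw [pow_add, mul_inv]; ring
      _ ≤ d * ((2 : ℝ) ^ g)⁻¹ * (α / (16 * d)) := by gcongr
      _ = α / 2 * r := by rw [hrdef]; field_simp; norm_num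
      _ ≤ a * r := by gcongr
  exact (hy (Metric.mem_ball.2 (h1.trans_le h3))).2 hz

noncomputable def goodSet {d : ℕ} (E : Set (EuclideanSpace ℝ (Fin d))) (α ρ : ℝ) (N R : ℕ) :
    Set (EuclideanSpace ℝ (Fin d)) :=
  {x | x ∈ E ∧ ‖x‖ ≤ R ∧ ∀ n : ℕ, N ≤ n → ρ * n ≤
    (((Finset.range n).filter fun i : ℕ => α ≤ porSet E x ((2 : ℝ) ^ (-(i : ℤ)))).card : ℝ)}

lemma pigeon {d : ℕ} (hd : 0 < d) {E : Set (EuclideanSpace ℝ (Fin d))} {α ρ : ℝ} (hα : 0 < α)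
    {N R m n : ℕ} (hm : ((2 : ℝ) ^ m)⁻¹ ≤ α / (16 * d)) (hn : N ≤ n)
    {x : EuclideanSpace ℝ (Fin d)} (hx : x ∈ goodSet E α ρ N R) :
    ∃ t, ⌈(ρ * n - 3) / 2 ^ d⌉₊ ≤ cnt E (cell t) kids m n 0 x := by
  have h1 := hx.2.2 n hn
  have hsub : ((Finset.range n).filter fun i : ℕ => α ≤ porSet E x ((2 : ℝ) ^ (-(i : ℤ)))) ⊆
      Finset.range 3 ∪ (Finset.univ : Finset (Fin d → Bool)).biUnion fun t =>
        ((Finset.Ico 0 n).filter (fun i => Hole E (cell t) kids m i (cell t i x))).image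
          (fun i => i + 3) := by
    intro i hi
    simp only [Finset.mem_filter, Finset.mem_range, Finset.mem_union, Finset.mem_biUnion,
      Finset.mem_univ, true_and, Finset.mem_image, Finset.mem_Ico, zero_le] at hi ⊢
    by_cases h3 : i < 3
    · exact Or.inl h3
    · right
      obtain ⟨g, rfl⟩ : ∃ g, i = g + 3 := ⟨i - 3, by omega⟩
      obtain ⟨t, ht⟩ := por_hole hd hα hm hi.2
      exact ⟨t, g, ⟨by omega, ht⟩, rfl⟩
  have hcard : ((Finset.range n).filter fun i : ℕ => α ≤ porSet E x ((2 : ℝ) ^ (-(i : ℤ)))).card ≤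
      3 + ∑ t : Fin d → Bool, cnt E (cell t) kids m n 0 x := by
    refine (Finset.card_le_card hsub).trans ((Finset.card_union_le _ _).trans ?_)
    rw [Finset.card_range]
    gcongr
    refine Finset.card_biUnion_le.trans (Finset.sum_le_sum fun t _ => Finset.card_image_le)
  have hcard' : ρ * n - 3 ≤ ∑ t : Fin d → Bool, (cnt E (cell t) kids m n 0 x : ℝ) := by
    have : ((((Finset.range n).filter fun i : ℕ => α ≤ porSet E x ((2 : ℝ) ^ (-(i : ℤ)))).card : ℕ) : ℝ)
      ≤ 3 + ∑ t : Fin d → Bool, (cnt E (cell t) kids m n 0 x : ℝ) := by exact_mod_cast hcard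
    linarith
  have hs : ∑ t : Fin d → Bool, (ρ * n - 3) / (2 : ℝ) ^ d ≤
      ∑ t : Fin d → Bool, (cnt E (cell t) kids m n 0 x : ℝ) := by
    refine le_trans (le_of_eq ?_) hcard'
    simp only [Finset.sum_const, Finset.card_univ, Fintype.card_fun, Fintype.card_bool,
      Fintype.card_fin, nsmul_eq_mul]
    push_cast
    field_simp
  obtain ⟨t, _, ht⟩ := Finset.exists_le_of_sum_le Finset.univ_nonempty hs
  exact ⟨t, Nat.ceil_le.2 ht⟩

lemma cell_zero_mem {d : ℕ} {R : ℕ} {x : EuclideanSpace ℝ (Fin d)} (hx : ‖x‖ ≤ R)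
    (t : Fin d → Bool) :
    cell t 0 x ∈ Fintype.piFinset fun _ : Fin d => Finset.Icc (-(R : ℤ)) (R + 1) := by
  simp only [Fintype.mem_piFinset, Finset.mem_Icc, cell, pow_zero, one_mul]
  intro j
  have h1 : |x j| ≤ R := by
    rw [← Real.norm_eq_abs]; exact (PiLp.norm_apply_le x j).trans hx
  have h2 := abs_le.1 h1
  have h3 : 0 ≤ sh (t j) ∧ sh (t j) ≤ 1 := by
    unfold sh; split_ifs <;> norm_num
  constructor
  · apply Int.le_floor.2; push_cast; linarith
  · have := Int.floor_le (x j + sh (t j))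
    have h5 : ((⌊x j + sh (t j)⌋ : ℤ) : ℝ) ≤ ((R + 1 : ℤ) : ℝ) := by push_cast; linarith
    exact_mod_cast h5

lemma exists_cover_s19 {d : ℕ} (hd : 0 < d) {E : Set (EuclideanSpace ℝ (Fin d))} {α ρ : ℝ}
    (hα : 0 < α) {N R m : ℕ} (hm : ((2 : ℝ) ^ m)⁻¹ ≤ α / (16 * d))
    {ω η : ℝ} (hω : 1 ≤ ω) (hη0 : 0 ≤ η) (hωη : ω ≤ 1 + η)
    (hη : 2 * η ≤ (((2 : ℝ) ^ d)⁻¹) ^ m) :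
    ∃ B : ℝ, 0 ≤ B ∧ ∀ n, N ≤ n → ∃ T : Finset ((Fin d → Bool) × (Fin d → ℤ)),
      (T.card : ℝ) * ω ^ ⌈(ρ * n - 3) / 2 ^ d⌉₊ ≤ B * ((2 : ℝ) ^ d) ^ (n + m) ∧
      ∀ x ∈ goodSet E α ρ N R, ∃ p ∈ T, cell p.1 (n + m) x = p.2 := by
  set K := Fintype.piFinset fun _ : Fin d => Finset.Icc (-(R : ℤ)) (R + 1) with hK
  refine ⟨((Finset.univ (α := Fin d → Bool)) ×ˢ K).card, by positivity, fun n hn => ?_⟩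
  set q := ⌈(ρ * n - 3) / 2 ^ d⌉₊
  have hc : ∀ p : (Fin d → Bool) × (Fin d → ℤ),
      Cov E (cell p.1) kids m n ω 0 p.2 q (((2 : ℝ) ^ d) ^ (n + m)) := by
    intro p
    have h2d : 2 ≤ 2 ^ d := Nat.le_self_pow (by omega) 2
    have := (core (A := E) (c := cell p.1) (ch := kids) (m := m) (n := n) (D := 2 ^ d) (ω := ω)
      (η := η) h2d kids_card hω hη0 hωη (by push_cast; exact hη) (cell_kids p.1) (n + m) 0
      (by omega) p.2 q).1
    push_cast at this
    exact this
  choose T hT1 hT2 using hc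
  refine ⟨((Finset.univ (α := Fin d → Bool)) ×ˢ K).biUnion fun p => (T p).image fun k => (p.1, k),
    ?_, ?_⟩
  · have h1 : ((((Finset.univ (α := Fin d → Bool)) ×ˢ K).biUnion
        fun p => (T p).image fun k => (p.1, k)).card : ℝ) ≤
        ∑ p ∈ (Finset.univ (α := Fin d → Bool)) ×ˢ K, ((T p).card : ℝ) := by
      exact_mod_cast Finset.card_biUnion_le.trans
        (Finset.sum_le_sum fun t _ => Finset.card_image_le)
    refine (mul_le_mul_of_nonneg_right h1 (by positivity)).trans ?_
    rw [Finset.sum_mul]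
    refine (Finset.sum_le_sum fun p _ => hT1 p).trans ?_
    simp
  · intro x hx
    obtain ⟨t, ht⟩ := pigeon hd hα hm hn hx
    refine ⟨(t, cell t (n + m) x), ?_, rfl⟩
    refine Finset.mem_biUnion.2 ⟨(t, cell t 0 x), ?_, ?_⟩
    · exact Finset.mem_product.2 ⟨Finset.mem_univ _, cell_zero_mem hx.2.1 t⟩
    · exact Finset.mem_image.2 ⟨_, hT2 (t, cell t 0 x) x hx.1 rfl ht, rfl⟩

lemma dimH_goodSet {d : ℕ} (hd : 0 < d) {E : Set (EuclideanSpace ℝ (Fin d))} {α ρ : ℝ}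
    (hα : 0 < α) {N R m : ℕ} (hm : ((2 : ℝ) ^ m)⁻¹ ≤ α / (16 * d))
    {η : ℝ} (hη0 : 0 ≤ η) (hη : 2 * η ≤ (((2 : ℝ) ^ d)⁻¹) ^ m)
    (s : NNReal) (hs : (s : ℝ) = d - η * ρ / 2 ^ d) :
    dimH (goodSet E α ρ N R) ≤ s := by
  have hη1 : η ≤ 1 := by
    have : (((2 : ℝ) ^ d)⁻¹) ^ m ≤ 1 :=
      pow_le_one₀ (by positivity) (inv_le_one_of_one_le₀ (one_le_pow₀ (by norm_num)))
    linarith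
  have hω : (1 : ℝ) ≤ (2 : ℝ) ^ η := Real.one_le_rpow (by norm_num) hη0
  have hωη : (2 : ℝ) ^ η ≤ 1 + η := by
    have := rpow_one_add_le_one_add_mul_self (s := 1) (by norm_num) hη0 hη1
    norm_num at this
    linarith
  obtain ⟨B, hB, hcov⟩ := exists_cover_s19 (E := E) (ρ := ρ) (N := N) (R := R) hd hα hm hω hη0 hωη hη
  choose! T hT1 hT2 using hcov
  apply dimH_le_of_hausdorffMeasure_ne_top
  set rr : ℕ → ℝ := fun n => d * ((2 : ℝ) ^ (n + m))⁻¹ with hrr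
  have hrr0 : ∀ n, 0 ≤ rr n := fun n => by positivity
  have hdiam : ∀ n (p : T n), Metric.ediam {x : EuclideanSpace ℝ (Fin d) |
      cell p.1.1 (n + m) x = p.1.2} ≤ ENNReal.ofReal (rr n) := by
    intro n p
    apply Metric.ediam_le
    intro x hx y hy
    rw [edist_dist]
    apply ENNReal.ofReal_le_ofReal
    exact (dist_of_cell hd (hx.trans hy.symm)).le
  have hmain := MeasureTheory.Measure.hausdorffMeasure_le_liminf_sum (ι := fun n => T n)
    (l := atTop) (s : ℝ)
    (goodSet E α ρ N R) (fun n => ENNReal.ofReal (rr n)) ?_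
    (fun n p => {x : EuclideanSpace ℝ (Fin d) | cell p.1.1 (n + m) x = p.1.2}) ?_ ?_
  rotate_left
  · rw [← ENNReal.ofReal_zero]
    apply ENNReal.tendsto_ofReal
    have h1 : Tendsto (fun n : ℕ => ((2 : ℝ) ^ (n + m))⁻¹) atTop (nhds 0) :=
      tendsto_inv_atTop_zero.comp
        ((tendsto_pow_atTop_atTop_of_one_lt (by norm_num)).comp (tendsto_add_atTop_nat m))
    simpa using h1.const_mul (d : ℝ)
  · exact Eventually.of_forall hdiam
  · filter_upwards [eventually_ge_atTop N] with n hn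
    intro x hx
    obtain ⟨p, hp, hpx⟩ := hT2 n hn x hx
    exact mem_iUnion.2 ⟨⟨p, hp⟩, hpx⟩
  set κ : ℝ := η * ρ / 2 ^ d with hκ
  set Q : ℝ := B * (d : ℝ) ^ (s : ℝ) * (2 : ℝ) ^ (κ * m + 3 * η / 2 ^ d) with hQ
  have hbound : ∀ n, N ≤ n → ((T n).card : ℝ) * rr n ^ (s : ℝ) ≤ Q := by
    intro n hn
    have h1 := hT1 n hn
    have h2 : (2 : ℝ) ^ (η * ((ρ * n - 3) / 2 ^ d)) ≤
        ((2 : ℝ) ^ η) ^ ⌈(ρ * n - 3) / 2 ^ d⌉₊ := by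
      rw [← Real.rpow_natCast ((2 : ℝ) ^ η), ← Real.rpow_mul (by norm_num)]
      apply Real.rpow_le_rpow_of_exponent_le (by norm_num)
      exact mul_le_mul_of_nonneg_left (Nat.le_ceil _) hη0
    have h3 : ((T n).card : ℝ) * (2 : ℝ) ^ (η * ((ρ * n - 3) / 2 ^ d)) ≤
        B * (2 : ℝ) ^ ((d : ℝ) * (n + m)) := by
      refine (mul_le_mul_of_nonneg_left h2 (by positivity)).trans (h1.trans (le_of_eq ?_))
      rw [← pow_mul, ← Real.rpow_natCast]; push_cast; rfl
    have h4 : rr n ^ (s : ℝ) = (d : ℝ) ^ (s : ℝ) * (2 : ℝ) ^ (-((n + m : ℝ) * s)) := by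
      rw [hrr]
      simp only
      rw [Real.mul_rpow (by positivity) (by positivity), ← Real.rpow_natCast,
        ← Real.rpow_neg (by norm_num), ← Real.rpow_mul (by norm_num)]
      push_cast; ring_nf
    have h5 : ((T n).card : ℝ) ≤
        B * (2 : ℝ) ^ ((d : ℝ) * (n + m)) * (2 : ℝ) ^ (-(η * ((ρ * n - 3) / 2 ^ d))) := by
      rw [Real.rpow_neg (by norm_num), ← div_eq_mul_inv, le_div_iff₀ (by positivity)]
      exact h3
    rw [h4]
    calc _ ≤ (B * (2 : ℝ) ^ ((d : ℝ) * (n + m)) * (2 : ℝ) ^ (-(η * ((ρ * n - 3) / 2 ^ d)))) *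
          ((d : ℝ) ^ (s : ℝ) * (2 : ℝ) ^ (-((n + m : ℝ) * s))) := by gcongr
      _ = B * (d : ℝ) ^ (s : ℝ) * ((2 : ℝ) ^ ((d : ℝ) * (n + m)) *
          (2 : ℝ) ^ (-(η * ((ρ * n - 3) / 2 ^ d))) * (2 : ℝ) ^ (-((n + m : ℝ) * s))) := by ring
      _ = Q := by
        rw [← Real.rpow_add (by norm_num), ← Real.rpow_add (by norm_num), hQ]
        congr 2
        rw [hs, hκ]; ring
  refine ne_top_of_le_ne_top (b := ENNReal.ofReal Q) ENNReal.ofReal_ne_top (hmain.trans ?_)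
  rw [← Filter.liminf_const (f := (atTop : Filter ℕ)) (ENNReal.ofReal Q)]
  refine Filter.liminf_le_liminf ?_
  filter_upwards [eventually_ge_atTop N] with n hn
  calc _ ≤ ∑ p : T n, ENNReal.ofReal (rr n) ^ (s : ℝ) :=
        Finset.sum_le_sum fun p _ => ENNReal.rpow_le_rpow (hdiam n p) s.coe_nonneg
    _ = ENNReal.ofReal (((T n).card : ℝ) * rr n ^ (s : ℝ)) := by
        rw [ENNReal.ofReal_mul (Nat.cast_nonneg (T n).card), ← ENNReal.ofReal_rpow_of_nonneg (hrr0 n) s.coe_nonneg]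
        simp
    _ ≤ ENNReal.ofReal Q := ENNReal.ofReal_le_ofReal (hbound n hn)

lemma subset_goodSets {d : ℕ} {E : Set (EuclideanSpace ℝ (Fin d))} {α ρ ρ' : ℝ}
    (hρ : ρ' < ρ) (h : IsMeanPorousSet E α ρ) :
    E ⊆ ⋃ p : ℕ × ℕ, goodSet E α ρ' p.1 p.2 := by
  intro x hx
  have h1 := Filter.eventually_lt_of_lt_liminf (lt_of_lt_of_le hρ (h x hx))
    (Filter.isBoundedUnder_of ⟨0, fun n => by positivity⟩)
  obtain ⟨N, hN⟩ := eventually_atTop.1 h1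
  obtain ⟨R, hR⟩ := exists_nat_ge ‖x‖
  refine mem_iUnion.2 ⟨(N, R), hx, hR, fun n hn => ?_⟩
  rcases Nat.eq_zero_or_pos n with rfl | hn0
  · simp
  · have h2 := hN n hn
    rw [lt_div_iff₀ (by exact_mod_cast hn0)] at h2
    refine h2.le.trans ?_
    rw [Nat.cast_le]
    refine le_trans (Finset.card_le_card (t := ((Finset.range n).filter fun i : ℕ =>
      α ≤ porSet E x ((2 : ℝ) ^ (-(i : ℤ)))).image (fun i : ℕ => (i : ℤ))) ?_)
      Finset.card_image_le
    intro z hz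
    simp only [Finset.mem_filter, Finset.bind_def, Finset.pure_def, Finset.mem_sup,
      Finset.mem_singleton] at hz
    obtain ⟨⟨i, hi, rfl⟩, hz⟩ := hz
    exact Finset.mem_image.2 ⟨i, Finset.mem_filter.2 ⟨hi, hz⟩, rfl⟩

/-- For every `d` there is a constant `C_d > 0` such that every mean
`(α,ρ)`-porous set `E ⊆ ℝ^d` (with `α ∈ (0,1/2]`, `ρ ∈ (0,1]`) has Hausdorff dimension
at most `d − C_d·ρ·α^d`. -/
theorem stmt19 (d : ℕ) (hd : 0 < d) :
    ∃ C : ℝ, 0 < C ∧ ∀ α ρ : ℝ, α ∈ Set.Ioc (0 : ℝ) (1 / 2) → ρ ∈ Set.Ioc (0 : ℝ) 1 →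
      ∀ E : Set (EuclideanSpace ℝ (Fin d)), IsMeanPorousSet E α ρ →
        (dimH E : EReal) ≤ (((d : ℝ) - C * ρ * α ^ d : ℝ) : EReal) := by
  have hd' : (1 : ℝ) ≤ d := by exact_mod_cast hd
  refine ⟨1 / (4 * 2 ^ d * (32 * d) ^ d), by positivity, ?_⟩
  intro α ρ hα hρ E hE
  obtain ⟨hα0, hα1⟩ := hα
  obtain ⟨hρ0, hρ1⟩ := hρ
  have hx : 1 ≤ 16 * d / α := by rw [le_div_iff₀ hα0]; linarith
  obtain ⟨m, hm1, hm2⟩ := exists_nat_pow_near hx (one_lt_two (α := ℝ))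
  have hm : ((2 : ℝ) ^ (m + 1))⁻¹ ≤ α / (16 * d) := by
    rw [← inv_div]; exact inv_anti₀ (by positivity) hm2.le
  have hm' : α / (32 * d) ≤ ((2 : ℝ) ^ (m + 1))⁻¹ := by
    have := inv_anti₀ (by positivity) hm1
    rw [inv_div] at this
    rw [pow_succ, mul_inv]
    calc α / (32 * d) = α / (16 * d) * 2⁻¹ := by field_simp; norm_num
      _ ≤ _ := by gcongr
  set η : ℝ := (((2 : ℝ) ^ d)⁻¹) ^ (m + 1) / 2 with hη
  have hη0 : 0 ≤ η := by positivity
  have hη1 : η ≤ 1 := by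
    have : (((2 : ℝ) ^ d)⁻¹) ^ (m + 1) ≤ 1 :=
      pow_le_one₀ (by positivity) (inv_le_one_of_one_le₀ (one_le_pow₀ (by norm_num)))
    linarith
  have h2d : (1 : ℝ) ≤ 2 ^ d := one_le_pow₀ (by norm_num)
  have hs0 : 0 ≤ (d : ℝ) - η * (ρ / 2) / 2 ^ d := by
    have : η * (ρ / 2) / 2 ^ d ≤ 1 := by
      rw [div_le_one (by positivity)]
      nlinarith
    linarith
  have hdim : dimH E ≤ ((Real.toNNReal ((d : ℝ) - η * (ρ / 2) / 2 ^ d) : NNReal) : ENNReal) := by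
    refine (dimH_mono (subset_goodSets (ρ' := ρ / 2) (by linarith) hE)).trans ?_
    rw [dimH_iUnion]
    refine iSup_le fun p => ?_
    exact dimH_goodSet hd hα0 hm hη0 (by rw [hη]; linarith) _ (Real.coe_toNNReal _ hs0)
  refine (EReal.coe_ennreal_le_coe_ennreal_iff.2 hdim).trans ?_
  rw [EReal.coe_nnreal_eq_coe_real, Real.coe_toNNReal _ hs0]
  apply EReal.coe_le_coe_iff.2
  have hηα : (α / (32 * d)) ^ d / 2 ≤ η := by
    rw [hη, inv_pow, ← pow_mul, mul_comm d, pow_mul, ← inv_pow]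
    gcongr
  have : 1 / (4 * 2 ^ d * (32 * d) ^ d) * ρ * α ^ d ≤ η * (ρ / 2) / 2 ^ d := by
    calc _ = (α / (32 * d)) ^ d / 2 * (ρ / 2) / 2 ^ d := by
          rw [div_pow]; field_simp; norm_num
      _ ≤ _ := by gcongr
  linarith
end
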